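/- The formal character of the Schur supermodule Ŝ_λ(k^{m|n}) equals the hook Schur function hs_λ(x_1,...,x_m; y_1,...,y_n) = Σ_{μ⊂λ} s_μ(x_1,...,x_m) s_{λ'/μ'}(y_1,...,y_n). -/

import Mathlib

open Finset
open scoped Classical

namespace SuperSchur

/-- Words of length `d` in an alphabet with `NN` letters. -/
abbrev Word (d NN : ℕ) := Fin d → Fin NN

/-- The `d`-th tensor power of the free superspace on `NN` letters, as the free
module on words. -/
abbrev Tens (k : Type) [Field k] (d NN : ℕ) := Word d NN →₀ k

variable (k : Type) [Field k]

/-- `sgn(ε, σ)` from the paper. -/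
noncomputable def sgnF {d : ℕ} (ε : Fin d → ZMod 2) (σ : Equiv.Perm (Fin d)) : k :=
  ∏ p ∈ univ.filter (fun p : Fin d × Fin d => p.1 < p.2 ∧ σ⁻¹ p.2 < σ⁻¹ p.1),
    (-1 : k) ^ ((ε p.1).val * (ε p.2).val)

/-- The signed (right) place-permutation action of `σ` on the tensor power, where the
letter `j` has parity `pr j`. -/
noncomputable def act {d NN : ℕ} (pr : Fin NN → ZMod 2) (σ : Equiv.Perm (Fin d)) :
    Tens k d NN →ₗ[k] Tens k d NN :=
  Finsupp.lsum k fun w =>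
    LinearMap.toSpanSingleton k _
      (sgnF k (fun s => pr (w s)) σ • Finsupp.single (w ∘ σ) (1 : k))

/-- The cells of the skew diagram `λ/μ` (at most `q` rows). -/
def cellsF (q : ℕ) (lam mu : ℕ → ℕ) : Finset (ℕ × ℕ) :=
  ((range q) ×ˢ range ((range q).sup lam)).filter fun p => mu p.1 ≤ p.2 ∧ p.2 < lam p.1

/-- The number of cells `d = |λ/μ|`. -/
def dOf (q : ℕ) (lam mu : ℕ → ℕ) : ℕ := (cellsF q lam mu).card

/-- Cells, ordered by the row-reading (lexicographic) order. -/
def cellsRL (q : ℕ) (lam mu : ℕ → ℕ) : Finset (ℕ ×ₗ ℕ) :=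
  (cellsF q lam mu).map toLex.toEmbedding

/-- Cells, ordered by the column-reading order. -/
def cellsCL (q : ℕ) (lam mu : ℕ → ℕ) : Finset (ℕ ×ₗ ℕ) :=
  (cellsF q lam mu).map ((Equiv.prodComm ℕ ℕ).trans toLex).toEmbedding

lemma cardRL (q : ℕ) (lam mu : ℕ → ℕ) : (cellsRL q lam mu).card = dOf q lam mu :=
  Finset.card_map _

lemma cardCL (q : ℕ) (lam mu : ℕ → ℕ) : (cellsCL q lam mu).card = dOf q lam mu :=
  Finset.card_map _

/-- The row-reading enumeration of the cells. -/
noncomputable def oR (q : ℕ) (lam mu : ℕ → ℕ) :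
    Fin (dOf q lam mu) ≃o {x // x ∈ cellsRL q lam mu} :=
  (cellsRL q lam mu).orderIsoOfFin (cardRL q lam mu)

/-- The column-reading enumeration of the cells. -/
noncomputable def oC (q : ℕ) (lam mu : ℕ → ℕ) :
    Fin (dOf q lam mu) ≃o {x // x ∈ cellsCL q lam mu} :=
  (cellsCL q lam mu).orderIsoOfFin (cardCL q lam mu)

/-- The cell `(i, j)` at row-reading position `r`. -/
noncomputable def cellOf (q : ℕ) (lam mu : ℕ → ℕ) (r : Fin (dOf q lam mu)) : ℕ × ℕ :=
  ofLex (oR q lam mu r).val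

/-- The cell `(i, j)` at column-reading position `s`. -/
noncomputable def cellC (q : ℕ) (lam mu : ℕ → ℕ) (s : Fin (dOf q lam mu)) : ℕ × ℕ :=
  (ofLex (oC q lam mu s).val).swap

lemma cellOf_mem (q : ℕ) (lam mu : ℕ → ℕ) (r : Fin (dOf q lam mu)) :
    cellOf q lam mu r ∈ cellsF q lam mu := by
  have h := Finset.mem_map_equiv.mp ((oR q lam mu r).2 : _ ∈ cellsRL q lam mu)
  simpa [cellOf] using h

lemma cellC_mem (q : ℕ) (lam mu : ℕ → ℕ) (s : Fin (dOf q lam mu)) :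
    cellC q lam mu s ∈ cellsF q lam mu := by
  have h := Finset.mem_map_equiv.mp ((oC q lam mu s).2 : _ ∈ cellsCL q lam mu)
  simpa [cellC, Equiv.prodComm] using h

/-- The permutation `σ_{λ'/μ'}` translating row-reading positions into column-reading
positions. -/
noncomputable def sigmaRC (q : ℕ) (lam mu : ℕ → ℕ) : Equiv.Perm (Fin (dOf q lam mu)) := by
  refine Equiv.ofBijective
    (fun s => (oR q lam mu).symm
      ⟨toLex (cellC q lam mu s), ?_⟩) ?_
  · simp only [cellsRL, Finset.mem_map, Equiv.toEmbedding_apply]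
    exact ⟨cellC q lam mu s, cellC_mem q lam mu s, rfl⟩
  · rw [Fintype.bijective_iff_injective_and_card]
    refine ⟨?_, rfl⟩
    intro a b h
    have h' := congrArg (oR q lam mu) h
    rw [OrderIso.apply_symm_apply, OrderIso.apply_symm_apply] at h'
    have hx : toLex (cellC q lam mu a) = toLex (cellC q lam mu b) := congrArg Subtype.val h'
    have hcc : cellC q lam mu a = cellC q lam mu b := toLex.injective hx
    have hswap : ofLex (oC q lam mu a).val = ofLex (oC q lam mu b).val := by
      have := congrArg Prod.swap hcc
      simpa [cellC] using this
    have : (oC q lam mu a).val = (oC q lam mu b).val := ofLex.injective hswap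
    exact (oC q lam mu).injective (Subtype.ext this)

/-- Row of the cell at row-reading position `r`. -/
noncomputable def rowOf (q : ℕ) (lam mu : ℕ → ℕ) (r : Fin (dOf q lam mu)) : ℕ :=
  (cellOf q lam mu r).1

/-- Column of the cell at row-reading position `r`. -/
noncomputable def colOf (q : ℕ) (lam mu : ℕ → ℕ) (r : Fin (dOf q lam mu)) : ℕ :=
  (cellOf q lam mu r).2

/-- `σ` permutes positions within the rows. -/
noncomputable def RowPerm (q : ℕ) (lam mu : ℕ → ℕ) (σ : Equiv.Perm (Fin (dOf q lam mu))) :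
    Prop := ∀ r, rowOf q lam mu (σ r) = rowOf q lam mu r

/-- `τ` permutes column-reading positions within the columns. -/
noncomputable def ColPermC (q : ℕ) (lam mu : ℕ → ℕ) (τ : Equiv.Perm (Fin (dOf q lam mu))) :
    Prop := ∀ s, (cellC q lam mu (τ s)).2 = (cellC q lam mu s).2

/-- `Γ_Π^{λ/μ}(M)`, realized as the row-wise invariants of the tensor power under the
signed action for the reversed parity `par + 1`. -/
noncomputable def GammaPi (q : ℕ) (lam mu : ℕ → ℕ) {NN : ℕ} (par : Fin NN → ZMod 2) :
    Submodule k (Tens k (dOf q lam mu) NN) :=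
  ⨅ (σ : Equiv.Perm (Fin (dOf q lam mu))) (_ : RowPerm q lam mu σ),
    LinearMap.eqLocus (act k (fun j => par j + 1) σ) LinearMap.id

/-- The relations defining the column-wise symmetric power quotient `S^{λ'/μ'}(M)`. -/
noncomputable def Urel (q : ℕ) (lam mu : ℕ → ℕ) {NN : ℕ} (par : Fin NN → ZMod 2) :
    Submodule k (Tens k (dOf q lam mu) NN) :=
  ⨆ (τ : Equiv.Perm (Fin (dOf q lam mu))) (_ : ColPermC q lam mu τ),
    LinearMap.range (act k par τ - LinearMap.id)

/-- The Schur map `θ̂_{λ'/μ'}(M) : M^{⊗ d} → S^{λ'/μ'}(M)` (to be restricted to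
`Γ_Π^{λ/μ}(M)`). -/
noncomputable def theta (q : ℕ) (lam mu : ℕ → ℕ) {NN : ℕ} (par : Fin NN → ZMod 2) :
    Tens k (dOf q lam mu) NN →ₗ[k]
      (Tens k (dOf q lam mu) NN ⧸ Urel k q lam mu par) :=
  (Urel k q lam mu par).mkQ ∘ₗ act k par (sigmaRC q lam mu)

/-- The Schur supermodule `Ŝ_{λ'/μ'}(M)`, the image of `Γ_Π^{λ/μ}(M)` under the Schur
map. -/
noncomputable def SHat (q : ℕ) (lam mu : ℕ → ℕ) {NN : ℕ} (par : Fin NN → ZMod 2) :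
    Submodule k (Tens k (dOf q lam mu) NN ⧸ Urel k q lam mu par) :=
  Submodule.map (theta k q lam mu par) (GammaPi k q lam mu par)

/-- Two words are row equivalent if one is obtained from the other by permuting
entries within rows. -/
noncomputable def rowEquivW (q : ℕ) (lam mu : ℕ → ℕ) {NN : ℕ}
    (w w' : Word (dOf q lam mu) NN) : Prop :=
  ∃ σ, RowPerm q lam mu σ ∧ w' = w ∘ σ

/-- The sign attached to a row rearrangement of a word, for the parity `pr`. -/
noncomputable def invSign (q : ℕ) (lam mu : ℕ → ℕ) {NN : ℕ} (pr : Fin NN → ZMod 2)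
    (w : Word (dOf q lam mu) NN) : k :=
  ∏ p ∈ univ.filter
      (fun p : Fin (dOf q lam mu) × Fin (dOf q lam mu) =>
        p.1 < p.2 ∧ rowOf q lam mu p.1 = rowOf q lam mu p.2 ∧ w p.2 < w p.1),
    (-1 : k) ^ ((pr (w p.1)).val * (pr (w p.2)).val)

/-- The divided-power basis element `Z_Π^{(t)}` of `Γ_Π^{λ/μ}(M)` attached to a (row
costandard) tableau with reading word `w`. -/
noncomputable def ZPi (q : ℕ) (lam mu : ℕ → ℕ) {NN : ℕ} (par : Fin NN → ZMod 2)
    (w : Word (dOf q lam mu) NN) : Tens k (dOf q lam mu) NN :=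
  ∑ w' : Word (dOf q lam mu) NN,
    (if rowEquivW q lam mu w w' then invSign k q lam mu (fun j => par j + 1) w' else 0) •
      Finsupp.single w' (1 : k)

/-- Positions `r, r'` are horizontally adjacent cells. -/
noncomputable def rowAdj (q : ℕ) (lam mu : ℕ → ℕ) (r r' : Fin (dOf q lam mu)) : Prop :=
  rowOf q lam mu r = rowOf q lam mu r' ∧ colOf q lam mu r' = colOf q lam mu r + 1

/-- Positions `r, r'` are vertically adjacent cells. -/
noncomputable def colAdj (q : ℕ) (lam mu : ℕ → ℕ) (r r' : Fin (dOf q lam mu)) : Prop :=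
  colOf q lam mu r = colOf q lam mu r' ∧ rowOf q lam mu r' = rowOf q lam mu r + 1

/-- Row costandard: rows nondecreasing, repeated entries only among odd letters. -/
noncomputable def RowCostd (q : ℕ) (lam mu : ℕ → ℕ) {NN : ℕ} (par : Fin NN → ZMod 2)
    (w : Word (dOf q lam mu) NN) : Prop :=
  ∀ r r', rowAdj q lam mu r r' → w r ≤ w r' ∧ (w r = w r' → par (w r) = 1)

/-- Costandard: additionally columns nondecreasing with repeats only among even
letters. -/
noncomputable def Costd (q : ℕ) (lam mu : ℕ → ℕ) {NN : ℕ} (par : Fin NN → ZMod 2)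
    (w : Word (dOf q lam mu) NN) : Prop :=
  RowCostd q lam mu par w ∧
    ∀ r r', colAdj q lam mu r r' → w r ≤ w r' ∧ (w r = w r' → par (w r) = 0)

/-- `t_{p,a}`: the number of entries `≤ a` among the first `p` rows. -/
noncomputable def countPA (q : ℕ) (lam mu : ℕ → ℕ) {NN : ℕ}
    (w : Word (dOf q lam mu) NN) (p a : ℕ) : ℕ :=
  (univ.filter fun r => rowOf q lam mu r < p ∧ ((w r : ℕ) ≤ a)).card

/-- The order `w₁ ⊴ w₂` on tableaux. -/
noncomputable def Tle (q : ℕ) (lam mu : ℕ → ℕ) {NN : ℕ}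
    (w₁ w₂ : Word (dOf q lam mu) NN) : Prop :=
  ∀ p a, countPA q lam mu w₂ p a ≤ countPA q lam mu w₁ p a

/-- The strict order `w₁ ◁ w₂`. -/
noncomputable def Tlt (q : ℕ) (lam mu : ℕ → ℕ) {NN : ℕ}
    (w₁ w₂ : Word (dOf q lam mu) NN) : Prop :=
  Tle q lam mu w₁ w₂ ∧ ∃ p a, countPA q lam mu w₂ p a < countPA q lam mu w₁ p a

/-- Number of cells in the rows before row `i`; the row-reading positions of row `i`
are `[rowStart i, rowStart (i+1))`. -/
def rowStart (q : ℕ) (lam mu : ℕ → ℕ) (i : ℕ) : ℕ :=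
  ((cellsF q lam mu).filter fun c => c.1 < i).card

def Bmem (lo hi x : ℕ) : Prop := lo ≤ x ∧ x < hi

/-- Position lies in row `i` or row `i+1`. -/
noncomputable def inBlock12 (q : ℕ) (lam mu : ℕ → ℕ) (i : ℕ)
    (r : Fin (dOf q lam mu)) : Prop :=
  rowOf q lam mu r = i ∨ rowOf q lam mu r = i + 1

/-- The coset representatives ("shuffles") implementing the multiplication
`Γ^u ⊗ Γ^{p₁-u} → Γ^{p₁}` and `Γ^{p₂-v} ⊗ Γ^v → Γ^{p₂}` on the rows `i, i+1`. -/
noncomputable def ShuffleSet (q : ℕ) (lam mu : ℕ → ℕ) (i u v : ℕ) :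
    Finset (Equiv.Perm (Fin (dOf q lam mu))) :=
  univ.filter fun σ =>
    (∀ r, ¬ inBlock12 q lam mu i r → σ r = r) ∧
    (∀ r, rowOf q lam mu r = i → rowOf q lam mu (σ r) = i) ∧
    (∀ r, rowOf q lam mu r = i + 1 → rowOf q lam mu (σ r) = i + 1) ∧
    (∀ r r' : Fin (dOf q lam mu), (r : ℕ) < r' →
      Bmem (rowStart q lam mu i) (rowStart q lam mu i + u) r →
      Bmem (rowStart q lam mu i) (rowStart q lam mu i + u) r' →
      (σ r : ℕ) < σ r') ∧
    (∀ r r' : Fin (dOf q lam mu), (r : ℕ) < r' →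
      Bmem (rowStart q lam mu i + u) (rowStart q lam mu (i + 1)) r →
      Bmem (rowStart q lam mu i + u) (rowStart q lam mu (i + 1)) r' →
      (σ r : ℕ) < σ r') ∧
    (∀ r r' : Fin (dOf q lam mu), (r : ℕ) < r' →
      Bmem (rowStart q lam mu (i + 1)) (rowStart q lam mu (i + 2) - v) r →
      Bmem (rowStart q lam mu (i + 1)) (rowStart q lam mu (i + 2) - v) r' →
      (σ r : ℕ) < σ r') ∧
    (∀ r r' : Fin (dOf q lam mu), (r : ℕ) < r' →
      Bmem (rowStart q lam mu (i + 2) - v) (rowStart q lam mu (i + 2)) r →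
      Bmem (rowStart q lam mu (i + 2) - v) (rowStart q lam mu (i + 2)) r' →
      (σ r : ℕ) < σ r')

/-- The component `◇_i(λ/μ, u, v; M)` of the boundary map, as an endomorphism of the
ambient tensor power. -/
noncomputable def DiamondMap (q : ℕ) (lam mu : ℕ → ℕ) {NN : ℕ} (par : Fin NN → ZMod 2)
    (i u v : ℕ) : Tens k (dOf q lam mu) NN →ₗ[k] Tens k (dOf q lam mu) NN :=
  ∑ σ ∈ ShuffleSet q lam mu i u v, act k (fun j => par j + 1) σ

/-- The parabolic subgroup fixing the block decomposition
`(rows ≠ i,i+1) ; [s_i, s_i+u) ; [s_i+u, s_{i+2}-v) ; [s_{i+2}-v, s_{i+2})`. -/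
noncomputable def QPermD (q : ℕ) (lam mu : ℕ → ℕ) (i u v : ℕ)
    (σ : Equiv.Perm (Fin (dOf q lam mu))) : Prop :=
  (∀ r, ¬ inBlock12 q lam mu i r → rowOf q lam mu (σ r) = rowOf q lam mu r) ∧
  (∀ r : Fin (dOf q lam mu), Bmem (rowStart q lam mu i) (rowStart q lam mu i + u) r →
    Bmem (rowStart q lam mu i) (rowStart q lam mu i + u) (σ r)) ∧
  (∀ r : Fin (dOf q lam mu),
    Bmem (rowStart q lam mu i + u) (rowStart q lam mu (i + 2) - v) r →
    Bmem (rowStart q lam mu i + u) (rowStart q lam mu (i + 2) - v) (σ r)) ∧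
  (∀ r : Fin (dOf q lam mu),
    Bmem (rowStart q lam mu (i + 2) - v) (rowStart q lam mu (i + 2)) r →
    Bmem (rowStart q lam mu (i + 2) - v) (rowStart q lam mu (i + 2)) (σ r))

/-- The domain `Γ_Π^{…} ⊗ (Γ_Π^u ⊗ Γ_Π^{p₁-u+p₂-v} ⊗ Γ_Π^v) ⊗ Γ_Π^{…}` of
`◇_i(λ/μ,u,v)`, as invariants. -/
noncomputable def DomD (q : ℕ) (lam mu : ℕ → ℕ) {NN : ℕ} (par : Fin NN → ZMod 2)
    (i u v : ℕ) : Submodule k (Tens k (dOf q lam mu) NN) :=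
  ⨅ (σ : Equiv.Perm (Fin (dOf q lam mu))) (_ : QPermD q lam mu i u v σ),
    LinearMap.eqLocus (act k (fun j => par j + 1) σ) LinearMap.id

/-- The image of the boundary map `◇_{λ/μ}(M)`. -/
noncomputable def ImDiamond (q : ℕ) (lam mu : ℕ → ℕ) {NN : ℕ} (par : Fin NN → ZMod 2) :
    Submodule k (Tens k (dOf q lam mu) NN) :=
  ⨆ (i : ℕ) (u : ℕ) (v : ℕ) (_ : u + v < lam (i + 1) - mu i),
    Submodule.map (DiamondMap k q lam mu par i u v) (DomD k q lam mu par i u v)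

attribute [irreducible] GammaPi Urel theta SHat ZPi ImDiamond DomD DiamondMap act sgnF invSign

end SuperSchur

namespace SuperSchur

/-- The weight of a word: the multiplicity of each letter. -/
noncomputable def wtW {d NN : ℕ} (w : Word d NN) : Fin NN → ℕ :=
  fun a => (univ.filter fun r => w r = a).card

/-- The span of the basis words of weight `μ` inside the tensor power. -/
noncomputable def WtSpan (k : Type) [Field k] (d NN : ℕ) (μf : Fin NN → ℕ) :
    Submodule k (Tens k d NN) :=
  Submodule.span k {x | ∃ w : Word d NN, wtW w = μf ∧ x = Finsupp.single w (1 : k)}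

/-- The weight space `(Ŝ)_μ` of the Schur supermodule. -/
noncomputable def SHatWt (k : Type) [Field k] (q : ℕ) (lam mu : ℕ → ℕ) {NN : ℕ}
    (par : Fin NN → ZMod 2) (μf : Fin NN → ℕ) :
    Submodule k (Tens k (dOf q lam mu) NN ⧸ Urel k q lam mu par) :=
  SHat k q lam mu par ⊓
    Submodule.map (Urel k q lam mu par).mkQ (WtSpan k (dOf q lam mu) NN μf)

/-- The formal character `ch(Ŝ) = Σ_μ dim (Ŝ)_μ · z^μ`. -/
noncomputable def chSHat (k : Type) [Field k] (q : ℕ) (lam mu : ℕ → ℕ) {NN : ℕ}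
    (par : Fin NN → ZMod 2) : MvPolynomial (Fin NN) ℤ :=
  ∑ μf ∈ Finset.image (fun w : Word (dOf q lam mu) NN => wtW w) univ,
    MvPolynomial.C (Module.finrank k ↥(SHatWt k q lam mu par μf) : ℤ) *
      MvPolynomial.monomial (Finsupp.equivFunOnFinite.symm μf) 1

/-- The conjugate partition `λ'`. -/
def conjOf (q : ℕ) (lam : ℕ → ℕ) : ℕ → ℕ :=
  fun j => ((range q).filter fun i => j < lam i).card

/-- Semistandardness of a tableau on a set of cells: rows weakly increasing,
columns strictly increasing. -/
def SSYTpred {m : ℕ} (cells : Finset (ℕ × ℕ)) (T : ↥cells → Fin m) : Prop :=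
  (∀ (c c' : ↥cells), c.1.1 = c'.1.1 → c'.1.2 = c.1.2 + 1 → T c ≤ T c') ∧
  (∀ (c c' : ↥cells), c.1.2 = c'.1.2 → c'.1.1 = c.1.1 + 1 → T c < T c')

/-- The generating polynomial `Σ_T Π_c x_{e(T(c))}` of semistandard tableaux on a set
of cells, in the variables selected by `e`; for a (skew) shape this is the (skew)
Schur polynomial. -/
noncomputable def tabPoly {m NN : ℕ} (cells : Finset (ℕ × ℕ)) (e : Fin m → Fin NN) :
    MvPolynomial (Fin NN) ℤ :=
  ∑ T ∈ (univ : Finset (↥cells → Fin m)).filter (SSYTpred cells),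
    ∏ c : ↥cells, MvPolynomial.X (e (T c))

/-- The partition `μ ⊆ λ` determined by `f`. -/
def muOf (q : ℕ) (lam : ℕ → ℕ) (f : (i : Fin q) → Fin (lam i + 1)) : ℕ → ℕ :=
  fun i => if h : i < q then (f ⟨i, h⟩ : ℕ) else 0

/-- The cells of the conjugate skew shape `λ'/μ'` (the transpose of `λ/μ`). -/
noncomputable def conjSkewCells (q : ℕ) (lam mu : ℕ → ℕ) : Finset (ℕ × ℕ) :=
  (cellsF q lam (fun _ => 0) \ cellsF q mu (fun _ => 0)).image Prod.swap

/-- The hook Schur polynomial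
`hs_λ(x₁,…,x_m; y₁,…,y_n) = Σ_{μ ⊆ λ} s_μ(x) · s_{λ'/μ'}(y)`, where the (skew) Schur
polynomials are given by their semistandard-tableaux expansions, the `x`-variables
being the first `m` and the `y`-variables the last `n` of the `m + n` variables. -/
noncomputable def hookSchur (q m n : ℕ) (lam : ℕ → ℕ) : MvPolynomial (Fin (m + n)) ℤ :=
  ∑ f ∈ (univ : Finset ((i : Fin q) → Fin (lam i + 1))).filter
      (fun f => ∀ i j : Fin q, i ≤ j → (f j : ℕ) ≤ (f i : ℕ)),
    tabPoly (cellsF q (muOf q lam f) (fun _ => 0)) (Fin.castAdd n) *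
      tabPoly (conjSkewCells q lam (muOf q lam f)) (Fin.natAdd m)

end SuperSchur

set_option linter.unusedSimpArgs false
set_option linter.unusedVariables false
open Finset
open scoped Classical
namespace SuperSchur

/-! ### Signs -/

lemma prod_pairs_comp {d : ℕ} {R : Type*} [CommMonoid R] (g : Fin d → Fin d → R)
    (hg : ∀ a b, g a b = g b a) (σ : Equiv.Perm (Fin d)) :
    ∏ p ∈ univ.filter (fun p : Fin d × Fin d => p.1 < p.2), g (σ p.1) (σ p.2) =
    ∏ p ∈ univ.filter (fun p : Fin d × Fin d => p.1 < p.2), g p.1 p.2 := by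
  refine Finset.prod_bij' (fun p _ => (min (σ p.1) (σ p.2), max (σ p.1) (σ p.2)))
    (fun p _ => (min (σ⁻¹ p.1) (σ⁻¹ p.2), max (σ⁻¹ p.1) (σ⁻¹ p.2))) ?_ ?_ ?_ ?_ ?_
  · rintro ⟨a, b⟩ h
    simp only [mem_filter, mem_univ, true_and] at h ⊢
    have : σ a ≠ σ b := fun e => h.ne (σ.injective e)
    rcases lt_or_gt_of_ne this with h' | h' <;> simp [h']
  · rintro ⟨a, b⟩ h
    simp only [mem_filter, mem_univ, true_and] at h ⊢
    have : σ⁻¹ a ≠ σ⁻¹ b := fun e => h.ne (σ⁻¹.injective e)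
    rcases lt_or_gt_of_ne this with h' | h' <;> simp [h.ne']
  · rintro ⟨a, b⟩ h
    simp only [mem_filter, mem_univ, true_and] at h
    rcases le_total (σ a) (σ b) with h' | h' <;> simp [h', h.le]
  · rintro ⟨a, b⟩ h
    simp only [mem_filter, mem_univ, true_and] at h
    rcases le_total (σ⁻¹ a) (σ⁻¹ b) with h' | h' <;> simp_all [h.le]
  · rintro ⟨a, b⟩ h
    rcases le_total (σ a) (σ b) with h' | h'
    · simp [h']
    · simp [h', hg]

variable {k : Type} [Field k]

lemma neg_one_pow_mul_self (j : ℕ) : ((-1 : k) ^ j) * (-1) ^ j = 1 := by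
  rw [← mul_pow]; simp

lemma sgnF_eq {d : ℕ} (ε : Fin d → ZMod 2) (σ : Equiv.Perm (Fin d)) :
    sgnF k ε σ = ∏ p ∈ univ.filter (fun p : Fin d × Fin d => p.1 < p.2),
      if σ⁻¹ p.2 < σ⁻¹ p.1 then (-1 : k) ^ ((ε p.1).val * (ε p.2).val) else 1 := by
  rw [← Finset.prod_filter, Finset.filter_filter, sgnF]

lemma sgnF_mul {d : ℕ} (ε : Fin d → ZMod 2) (σ τ : Equiv.Perm (Fin d)) :
    sgnF k ε (σ * τ) = sgnF k ε σ * sgnF k (ε ∘ σ) τ := by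
  set g : Fin d → Fin d → k := fun a b =>
    if (σ⁻¹ a < σ⁻¹ b ∧ τ⁻¹ (σ⁻¹ b) < τ⁻¹ (σ⁻¹ a)) ∨ (σ⁻¹ b < σ⁻¹ a ∧ τ⁻¹ (σ⁻¹ a) < τ⁻¹ (σ⁻¹ b))
    then (-1 : k) ^ ((ε a).val * (ε b).val) else 1 with hg
  have h2 : sgnF k (ε ∘ σ) τ =
      ∏ p ∈ univ.filter (fun p : Fin d × Fin d => p.1 < p.2), g p.1 p.2 := by
    rw [← prod_pairs_comp g _ σ, sgnF_eq]
    · refine Finset.prod_congr rfl ?_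
      rintro ⟨a, b⟩ h
      simp only [mem_filter, mem_univ, true_and] at h
      simp [hg, h, h.le, h.not_gt]
    · intro a b
      simp only [hg, mul_comm (ε a).val, or_comm]
  rw [h2, sgnF_eq, sgnF_eq, ← Finset.prod_mul_distrib]
  refine Finset.prod_congr rfl ?_
  rintro ⟨a, b⟩ h
  simp only [mem_filter, mem_univ, true_and] at h
  have h1 : σ⁻¹ a ≠ σ⁻¹ b := fun e => h.ne (σ⁻¹.injective e)
  have h3 : τ⁻¹ (σ⁻¹ a) ≠ τ⁻¹ (σ⁻¹ b) := fun e => h1 (τ⁻¹.injective e)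
  simp only [hg, mul_inv_rev, Equiv.Perm.mul_apply]
  rcases lt_or_gt_of_ne h1 with h1 | h1 <;> rcases lt_or_gt_of_ne h3 with h3 | h3 <;>
    simp only [h1, h1.not_gt, h3, h3.not_gt, neg_one_pow_mul_self, if_true, if_false, and_true,
      true_and, and_false, false_and, or_true, or_false, mul_one, one_mul]

lemma sgnF_sq {d : ℕ} (ε : Fin d → ZMod 2) (σ : Equiv.Perm (Fin d)) :
    sgnF k ε σ * sgnF k ε σ = 1 := by
  rw [sgnF, ← Finset.prod_mul_distrib]
  exact Finset.prod_eq_one fun p _ => neg_one_pow_mul_self _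

lemma sgnF_fix {d : ℕ} (ε : Fin d → ZMod 2) (σ : Equiv.Perm (Fin d))
    (h : ∀ p, ε p ≠ 0 → σ p = p) : sgnF k ε σ = 1 := by
  rw [sgnF]
  refine Finset.prod_eq_one ?_
  rintro ⟨a, b⟩ hp
  simp only [mem_filter, mem_univ, true_and] at hp
  by_cases ha : ε a = 0
  · simp [ha]
  by_cases hb : ε b = 0
  · simp [hb]
  have e1 : σ⁻¹ a = a := by rw [Equiv.Perm.inv_eq_iff_eq, h a ha]
  have e2 : σ⁻¹ b = b := by rw [Equiv.Perm.inv_eq_iff_eq, h b hb]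
  rw [e1, e2] at hp
  exact absurd hp.1 hp.2.not_gt

lemma sgnF_one {d : ℕ} (ε : Fin d → ZMod 2) : sgnF k ε 1 = 1 :=
  sgnF_fix ε 1 (by simp)

lemma sign_eq_inv {d : ℕ} (σ : Equiv.Perm (Fin d)) :
    ∏ _p ∈ univ.filter (fun p : Fin d × Fin d => p.1 < p.2 ∧ σ⁻¹ p.2 < σ⁻¹ p.1), (-1 : k)
      = ((Equiv.Perm.sign σ : ℤ) : k) := by
  rw [← Equiv.Perm.sign_inv, Equiv.Perm.sign_eq_prod_prod_Ioi, ← Finset.filter_filter,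
    Finset.prod_filter, Finset.prod_filter, ← Finset.univ_product_univ, Finset.prod_product]
  push_cast
  refine Finset.prod_congr rfl fun a _ => ?_
  rw [← Finset.prod_filter]
  have : (univ.filter fun x => a < x) = Ioi a := by ext; simp
  rw [this]
  refine Finset.prod_congr rfl fun b hb => ?_
  have h1 : σ⁻¹ a ≠ σ⁻¹ b := fun e => (Finset.mem_Ioi.1 hb).ne (σ⁻¹.injective e)
  rcases lt_or_gt_of_ne h1 with h1 | h1 <;>
    simp only [h1, h1.not_gt, if_true, if_false] <;> simp

lemma inv_count {d : ℕ} (σ : Equiv.Perm (Fin d)) (p : Fin d) :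
    (univ.filter fun b => p < b ∧ σ⁻¹ b < σ⁻¹ p).card +
      (univ.filter fun a => a < p ∧ σ⁻¹ p < σ⁻¹ a).card +
      2 * (univ.filter fun a => a < p ∧ σ⁻¹ a < σ⁻¹ p).card = (p : ℕ) + (σ⁻¹ p : Fin d) := by
  have h1 : (univ.filter fun a => a < p).card = (p : ℕ) := by
    rw [show (univ.filter fun a => a < p) = Iio p by ext; simp, Fin.card_Iio]
  have h2 : (univ.filter fun a => σ⁻¹ a < σ⁻¹ p).card = (σ⁻¹ p : Fin d) := by
    rw [← Fin.card_Iio (σ⁻¹ p)]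
    refine Finset.card_bij (fun a _ => σ⁻¹ a) (by simp) (by simp) ?_
    intro b hb
    exact ⟨σ b, by simpa using hb, by simp⟩
  rw [← Finset.card_filter_add_card_filter_not (s := univ.filter fun a => a < p)
    (fun a => σ⁻¹ a < σ⁻¹ p), Finset.filter_filter, Finset.filter_filter] at h1
  rw [← Finset.card_filter_add_card_filter_not (s := univ.filter fun a => σ⁻¹ a < σ⁻¹ p)
    (fun a => a < p), Finset.filter_filter, Finset.filter_filter] at h2
  have e1 : (univ.filter fun a => a < p ∧ ¬ σ⁻¹ a < σ⁻¹ p) =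
      univ.filter fun a => a < p ∧ σ⁻¹ p < σ⁻¹ a := by
    ext a
    simp only [mem_filter, mem_univ, true_and, not_lt]
    refine and_congr_right fun h => ⟨fun h' => h'.lt_of_ne fun e => h.ne (σ⁻¹.injective e.symm),
      fun h => h.le⟩
  have e2 : (univ.filter fun a => σ⁻¹ a < σ⁻¹ p ∧ ¬ a < p) =
      univ.filter fun b => p < b ∧ σ⁻¹ b < σ⁻¹ p := by
    ext a
    simp only [mem_filter, mem_univ, true_and, not_lt]
    refine ⟨fun h => ⟨h.2.lt_of_ne ?_, h.1⟩, fun h => ⟨h.2, h.1.le⟩⟩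
    rintro rfl
    exact lt_irrefl _ h.1
  have e3 : (univ.filter fun a => σ⁻¹ a < σ⁻¹ p ∧ a < p) =
      univ.filter fun a => a < p ∧ σ⁻¹ a < σ⁻¹ p := by
    ext a; simp [and_comm]
  rw [e1] at h1
  rw [e2, e3] at h2
  omega

lemma sgnF_add_one {d : ℕ} (ε : Fin d → ZMod 2) (σ : Equiv.Perm (Fin d)) :
    sgnF k (fun p => ε p + 1) σ = ((Equiv.Perm.sign σ : ℤ) : k) * sgnF k ε σ *
      ∏ p, (-1 : k) ^ ((ε p).val * ((p : ℕ) + (σ⁻¹ p : Fin d))) := by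
  have key : ∀ a b : ZMod 2, (-1 : k) ^ ((a + 1).val * (b + 1).val) =
      (-1) * (-1 : k) ^ (a.val * b.val) * ((-1) ^ a.val * (-1) ^ b.val) := by
    have h : ∀ a : ZMod 2, a = 0 ∨ a = 1 := by decide
    have h11 : (1 + 1 : ZMod 2) = 0 := by decide
    intro a b
    rcases h a with rfl | rfl <;> rcases h b with rfl | rfl <;> simp [h11, ZMod.val_one]
  have h3 : ∏ p ∈ univ.filter (fun p : Fin d × Fin d => p.1 < p.2 ∧ σ⁻¹ p.2 < σ⁻¹ p.1),
      ((-1 : k) ^ (ε p.1).val * (-1) ^ (ε p.2).val) =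
      ∏ p, (-1 : k) ^ ((ε p).val * ((p : ℕ) + (σ⁻¹ p : Fin d))) := by
    rw [Finset.prod_mul_distrib, Finset.prod_filter, Finset.prod_filter,
      ← Finset.univ_product_univ, Finset.prod_product, Finset.prod_product_right,
      ← Finset.prod_mul_distrib]
    refine Finset.prod_congr rfl fun p _ => ?_
    simp only
    rw [← Finset.prod_filter, ← Finset.prod_filter, Finset.prod_const, Finset.prod_const,
      ← inv_count, ← pow_mul, ← pow_mul, mul_add, mul_add, pow_add, pow_add]
    rw [mul_left_comm _ 2, pow_mul (-1 : k) 2]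
    simp
  rw [← h3, ← sign_eq_inv, sgnF, sgnF, ← Finset.prod_mul_distrib, ← Finset.prod_mul_distrib]
  exact Finset.prod_congr rfl fun p _ => key _ _

/-- If the parity is `σ`-invariant, shifting the parity amounts to the usual sign. -/
lemma sgnF_add_one_inv {d : ℕ} (ε : Fin d → ZMod 2) (σ : Equiv.Perm (Fin d))
    (h : ∀ p, ε (σ p) = ε p) :
    sgnF k (fun p => ε p + 1) σ = ((Equiv.Perm.sign σ : ℤ) : k) * sgnF k ε σ := by
  rw [sgnF_add_one]
  have : ∏ p, (-1 : k) ^ ((ε p).val * ((p : ℕ) + (σ⁻¹ p : Fin d))) = 1 := by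
    simp only [mul_add, pow_add]
    rw [Finset.prod_mul_distrib, ← Equiv.prod_comp σ (fun p => (-1 : k) ^ ((ε p).val * (σ⁻¹ p : Fin d))),
      ← Finset.prod_mul_distrib]
    refine Finset.prod_eq_one fun p _ => ?_
    rw [h, show σ⁻¹ (σ p) = p from σ.symm_apply_apply p]
    exact neg_one_pow_mul_self _
  rw [this, mul_one]

/-! ### The signed action -/

section act
variable {d NN : ℕ} (pr : Fin NN → ZMod 2)

lemma act_single (σ : Equiv.Perm (Fin d)) (w : Word d NN) (c : k) :
    act k pr σ (Finsupp.single w c) =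
      Finsupp.single (w ∘ σ) (c * sgnF k (fun s => pr (w s)) σ) := by
  simp [act]

lemma act_mul (σ τ : Equiv.Perm (Fin d)) (v : Tens k d NN) :
    act k pr (σ * τ) v = act k pr τ (act k pr σ v) := by
  induction v using Finsupp.induction_linear with
  | zero => simp
  | add f g hf hg => simp [hf, hg]
  | single w c =>
    rw [act_single, act_single, act_single, sgnF_mul, mul_assoc]
    rfl

lemma act_one (v : Tens k d NN) : act k pr 1 v = v := by
  induction v using Finsupp.induction_linear with
  | zero => simp
  | add f g hf hg => simp [hf, hg]
  | single w c =>
    rw [act_single, sgnF_one]; simp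

lemma act_apply_comp (σ : Equiv.Perm (Fin d)) (v : Tens k d NN) (w : Word d NN) :
    act k pr σ v (w ∘ σ) = sgnF k (fun s => pr (w s)) σ * v w := by
  induction v using Finsupp.induction_linear with
  | zero => simp
  | add f g hf hg => simp [hf, hg, mul_add]
  | single u c =>
    rw [act_single, Finsupp.single_apply, Finsupp.single_apply]
    by_cases h : u = w
    · subst h; simp [mul_comm]
    · have : u ∘ σ ≠ w ∘ σ := fun e => h (σ.surjective.injective_comp_right e)
      simp [h, this]

end act
end SuperSchur

set_option linter.unusedSimpArgs false
set_option linter.unusedVariables false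
open Finset
open scoped Classical
namespace SuperSchur

/-! ### Signed orbit sums -/

/-- Permutations preserving a colouring of the positions. -/
def stabK {d : ℕ} (κ : Fin d → ℕ) : Subgroup (Equiv.Perm (Fin d)) where
  carrier := {σ | ∀ r, κ (σ r) = κ r}
  mul_mem' := by
    intro a b ha hb r
    simp only [Set.mem_setOf_eq] at ha hb
    rw [Equiv.Perm.mul_apply, ha, hb]
  one_mem' := by intro r; rfl
  inv_mem' := by
    intro a ha r
    have := ha (a⁻¹ r)
    rw [show a (a⁻¹ r) = r from a.apply_symm_apply r] at this
    exact this.symm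

lemma mem_stabK {d : ℕ} {κ : Fin d → ℕ} {σ : Equiv.Perm (Fin d)} :
    σ ∈ stabK κ ↔ ∀ r, κ (σ r) = κ r := Iff.rfl

section orb
variable {k : Type} [Field k] {d NN : ℕ} (pr : Fin NN → ZMod 2)

/-- Power of the sign character with values in `k`. -/
def chi (k : Type) [Field k] {d : ℕ} (e : ℕ) (σ : Equiv.Perm (Fin d)) : k :=
  ((Equiv.Perm.sign σ : ℤ) : k) ^ e

lemma chi_mul (e : ℕ) (σ τ : Equiv.Perm (Fin d)) : chi k e (σ * τ) = chi k e σ * chi k e τ := by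
  simp [chi, mul_pow]

lemma chi_sq (e : ℕ) (σ : Equiv.Perm (Fin d)) : chi k e σ * chi k e σ = 1 := by
  rcases Int.units_eq_one_or (Equiv.Perm.sign σ) with h | h
  · simp [chi, h]
  · simp [chi, h, ← mul_pow]

lemma chi_one (e : ℕ) : chi k e (1 : Equiv.Perm (Fin d)) = 1 := by simp [chi]

lemma chi_inv (e : ℕ) (σ : Equiv.Perm (Fin d)) : chi k e σ⁻¹ = chi k e σ := by simp [chi]

/-- The twisted sign cocycle. -/
noncomputable def cs (k : Type) [Field k] (e : ℕ) (σ : Equiv.Perm (Fin d)) (w : Word d NN) : k :=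
  chi k e σ * sgnF k (fun s => pr (w s)) σ

lemma cs_mul (e : ℕ) (σ τ : Equiv.Perm (Fin d)) (w : Word d NN) :
    cs pr k e (σ * τ) w = cs pr k e σ w * cs pr k e τ (w ∘ σ) := by
  simp only [cs, chi_mul, sgnF_mul]
  simp only [Function.comp_def]
  ring

lemma cs_sq (e : ℕ) (σ : Equiv.Perm (Fin d)) (w : Word d NN) :
    cs pr k e σ w * cs pr k e σ w = 1 := by
  have h1 := chi_sq (k := k) e σ
  have h2 := sgnF_sq (k := k) (fun s => pr (w s)) σ
  simp only [cs]
  linear_combination h1 * (sgnF k (fun s => pr (w s)) σ * sgnF k (fun s => pr (w s)) σ) + h2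

lemma cs_one (e : ℕ) (w : Word d NN) : cs pr k e 1 w = 1 := by
  simp [cs, chi_one, sgnF_one]

lemma cs_ne_zero (e : ℕ) (σ : Equiv.Perm (Fin d)) (w : Word d NN) : cs pr k e σ w ≠ 0 := by
  intro h
  have := cs_sq (k := k) pr e σ w
  simp [h] at this

lemma inv_iff (e : ℕ) (σ : Equiv.Perm (Fin d)) (v : Tens k d NN) :
    act k pr σ v = chi k e σ • v ↔ ∀ w, v (w ∘ σ) = cs pr k e σ w * v w := by
  have hc := chi_sq (k := k) e σ
  constructor
  · intro h w
    have := act_apply_comp pr σ v w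
    rw [h, Finsupp.smul_apply, smul_eq_mul] at this
    simp only [cs]
    linear_combination (chi k e σ) * this - v (w ∘ σ) * hc
  · intro h
    ext u
    obtain ⟨w, rfl⟩ : ∃ w, u = w ∘ σ := ⟨u ∘ σ.symm, by ext; simp⟩
    rw [act_apply_comp, Finsupp.smul_apply, smul_eq_mul, h]
    simp only [cs]
    linear_combination -sgnF k (fun s => pr (w s)) σ * v w * hc

/-- Admissible words. -/
def Adm (k : Type) [Field k] (κ : Fin d → ℕ) (e : ℕ) (t : Word d NN) : Prop :=
  ∀ σ ∈ stabK κ, t ∘ σ = t → cs pr k e σ t = 1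

/-- Coefficients of the signed orbit sum. -/
noncomputable def orb (k : Type) [Field k] (κ : Fin d → ℕ) (e : ℕ) (t : Word d NN)
    (w : Word d NN) : k :=
  if h : ∃ σ ∈ stabK κ, w = t ∘ σ then cs pr k e h.choose t else 0

variable {pr}

lemma orb_ne_zero {κ : Fin d → ℕ} {e : ℕ} {t w : Word d NN} (h : orb pr k κ e t w ≠ 0) :
    ∃ σ ∈ stabK κ, w = t ∘ σ := by
  by_contra h'
  exact h (dif_neg h')

lemma orb_comp_self {κ : Fin d → ℕ} {e : ℕ} {t : Word d NN} (ht : Adm pr k κ e t)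
    {σ : Equiv.Perm (Fin d)} (hσ : σ ∈ stabK κ) : orb pr k κ e t (t ∘ σ) = cs pr k e σ t := by
  have h : ∃ τ ∈ stabK κ, t ∘ σ = t ∘ τ := ⟨σ, hσ, rfl⟩
  rw [orb, dif_pos h]
  obtain ⟨h1, h2⟩ := h.choose_spec
  set τ := h.choose
  have e1 : cs pr k e (σ * τ⁻¹) t = 1 := by
    refine ht _ (mul_mem hσ (inv_mem h1)) ?_
    rw [Equiv.Perm.coe_mul, ← Function.comp_assoc, h2]
    ext r
    simp
  have e2 : cs pr k e (τ * τ⁻¹) t = 1 := by rw [mul_inv_cancel, cs_one]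
  rw [cs_mul] at e1 e2
  rw [h2] at e1
  have e3 := cs_ne_zero (k := k) pr e τ⁻¹ (t ∘ τ)
  exact mul_right_cancel₀ e3 (e2.trans e1.symm)

lemma orb_self {κ : Fin d → ℕ} {e : ℕ} {t : Word d NN} (ht : Adm pr k κ e t) :
    orb pr k κ e t t = 1 := by
  have := orb_comp_self ht (one_mem (stabK κ))
  rwa [cs_one] at this

lemma orb_comp {κ : Fin d → ℕ} {e : ℕ} {t : Word d NN} (ht : Adm pr k κ e t)
    {σ : Equiv.Perm (Fin d)} (hσ : σ ∈ stabK κ) (w : Word d NN) :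
    orb pr k κ e t (w ∘ σ) = cs pr k e σ w * orb pr k κ e t w := by
  by_cases h : ∃ τ ∈ stabK κ, w = t ∘ τ
  · obtain ⟨τ, h1, rfl⟩ := h
    rw [Function.comp_assoc, ← Equiv.Perm.coe_mul, orb_comp_self ht (mul_mem h1 hσ),
      orb_comp_self ht h1, cs_mul, mul_comm]
  · have h' : ¬ ∃ τ ∈ stabK κ, w ∘ σ = t ∘ τ := by
      rintro ⟨τ, h1, h2⟩
      refine h ⟨τ * σ⁻¹, mul_mem h1 (inv_mem hσ), ?_⟩
      rw [Equiv.Perm.coe_mul, ← Function.comp_assoc, ← h2]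
      ext r
      simp
    rw [orb, orb, dif_neg h, dif_neg h', mul_zero]

/-- The signed orbit sum. -/
noncomputable def Zv (pr : Fin NN → ZMod 2) (k : Type) [Field k] (κ : Fin d → ℕ) (e : ℕ)
    (t : Word d NN) : Tens k d NN :=
  Finsupp.equivFunOnFinite.symm (orb pr k κ e t)

@[simp] lemma Zv_apply (κ : Fin d → ℕ) (e : ℕ) (t w : Word d NN) :
    Zv pr k κ e t w = orb pr k κ e t w := rfl

lemma act_Zv {κ : Fin d → ℕ} {e : ℕ} {t : Word d NN} (ht : Adm pr k κ e t)
    {σ : Equiv.Perm (Fin d)} (hσ : σ ∈ stabK κ) :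
    act k pr σ (Zv pr k κ e t) = chi k e σ • Zv pr k κ e t := by
  rw [inv_iff]
  exact fun w => orb_comp ht hσ w

lemma zmod2 (a : ZMod 2) : a = 0 ∨ a = 1 := by revert a; decide

lemma adm_sign {κ : Fin d → ℕ} {t : Word d NN}
    (h : ∀ r r', κ r = κ r' → t r = t r' → pr (t r) = 0 → r = r') : Adm pr k κ 1 t := by
  intro σ hσ ht
  have ht' : ∀ r, t (σ r) = t r := fun r => congrFun ht r
  have h1 := sgnF_add_one_inv (k := k) (fun s => pr (t s)) σ (fun r => by rw [ht'])
  rw [cs, chi, pow_one, ← h1]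
  refine sgnF_fix _ _ fun p hp => ?_
  rcases zmod2 (pr (t p)) with h0 | h0
  · exact (h p (σ p) (hσ p).symm (ht' p).symm h0).symm
  · rw [h0] at hp
    exact absurd (by decide) hp

lemma adm_triv {κ : Fin d → ℕ} {t : Word d NN}
    (h : ∀ r r', κ r = κ r' → t r = t r' → pr (t r) = 1 → r = r') : Adm pr k κ 0 t := by
  intro σ hσ ht
  have ht' : ∀ r, t (σ r) = t r := fun r => congrFun ht r
  rw [cs, chi, pow_zero, one_mul]
  refine sgnF_fix _ _ fun p hp => ?_
  rcases zmod2 (pr (t p)) with h0 | h0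
  · exact absurd h0 hp
  · exact (h p (σ p) (hσ p).symm (ht' p).symm h0).symm

/-! ### Relative traces -/

/-- One term of the relative trace. -/
noncomputable def trT (pr : Fin NN → ZMod 2) (v : Tens k d NN) (σ : Equiv.Perm (Fin d)) :
    Tens k d NN := chi k 1 σ • act k pr σ⁻¹ v

/-- The relative trace from `Q` to `R`. -/
noncomputable def trV (pr : Fin NN → ZMod 2) (R Q : Subgroup (Equiv.Perm (Fin d)))
    (v : Tens k d NN) : Tens k d NN :=
  ∑ c : R ⧸ Q.subgroupOf R, trT pr v (c.out : R)

lemma trT_mul {Q : Subgroup (Equiv.Perm (Fin d))} {v : Tens k d NN}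
    (hv : ∀ π ∈ Q, act k pr π v = chi k 1 π • v) (σ π : Equiv.Perm (Fin d)) (hπ : π ∈ Q) :
    trT pr v (σ * π) = trT pr v σ := by
  rw [trT, trT, mul_inv_rev, act_mul, hv _ (inv_mem hπ), chi_inv, map_smul, smul_smul, chi_mul,
    mul_assoc, chi_sq, mul_one]

lemma act_trT (v : Tens k d NN) (g σ : Equiv.Perm (Fin d)) :
    act k pr g (trT pr v σ) = chi k 1 g • trT pr v (g⁻¹ * σ) := by
  rw [trT, trT, map_smul, ← act_mul, mul_inv_rev, inv_inv, smul_smul, chi_mul, chi_inv,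
    ← mul_assoc, chi_sq, one_mul]

lemma act_trV (R Q : Subgroup (Equiv.Perm (Fin d))) {v : Tens k d NN}
    (hv : ∀ π ∈ Q, act k pr π v = chi k 1 π • v) {g : Equiv.Perm (Fin d)} (hg : g ∈ R) :
    act k pr g (trV pr R Q v) = chi k 1 g • trV pr R Q v := by
  rw [trV, map_sum]
  simp only [act_trT]
  rw [← Finset.smul_sum]
  congr 1
  let g' : R := ⟨g, hg⟩
  refine Fintype.sum_equiv (MulAction.toPerm g'⁻¹) _ _ fun c => ?_
  have h : (QuotientGroup.mk (g'⁻¹ * c.out) : R ⧸ Q.subgroupOf R) = g'⁻¹ • c := by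
    conv_rhs => rw [← QuotientGroup.out_eq' c]
    rfl
  have h2 : (QuotientGroup.mk ((g'⁻¹ • c).out) : R ⧸ Q.subgroupOf R)
      = QuotientGroup.mk (g'⁻¹ * c.out) := by
    rw [h]; exact QuotientGroup.out_eq' _
  rw [QuotientGroup.eq, Subgroup.mem_subgroupOf] at h2
  have h3 := trT_mul hv ((g'⁻¹ • c).out : R) _ h2
  rw [MulAction.toPerm_apply, ← h3]
  simp [g']

end orb
end SuperSchur

set_option linter.unusedSimpArgs false
set_option linter.unusedVariables false
open Finset
open scoped Classical

namespace SuperSchur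

/-- Shape data: positions in row reading order of a straight shape. -/
structure Shp {d : ℕ} (row col : Fin d → ℕ) : Prop where
  mono : Monotone row
  lt : ∀ r r', row r = row r' → r < r' → col r < col r'
  down : ∀ r i j, i ≤ row r → j ≤ col r → ∃ r', row r' = i ∧ col r' = j

section comb
variable {d NN : ℕ} {row col : Fin d → ℕ}

lemma Shp.inj (S : Shp row col) {r r' : Fin d} (h1 : row r = row r') (h2 : col r = col r') :
    r = r' := by
  rcases lt_trichotomy r r' with h | h | h
  · have := S.lt r r' h1 h; omega
  · exact h
  · have := S.lt r' r h1.symm h; omega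

lemma Shp.lt' (S : Shp row col) {r r' : Fin d} (h1 : row r = row r') (h2 : col r < col r') :
    r < r' := by
  rcases lt_trichotomy r r' with h | h | h
  · exact h
  · subst h; omega
  · have := S.lt r' r h1.symm h; omega

/-- number of letters at most `a` in the first `p` rows -/
def cnt (row : Fin d → ℕ) (w : Word d NN) (p : ℕ) (a : Fin NN) : ℕ :=
  (univ.filter fun r => row r < p ∧ w r ≤ a).card

lemma cnt_comp {σ : Equiv.Perm (Fin d)} (hσ : σ ∈ stabK row) (w : Word d NN) (p : ℕ) (a : Fin NN) :
    cnt row (w ∘ σ) p a = cnt row w p a := by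
  rw [mem_stabK] at hσ
  refine Finset.card_equiv σ ?_
  intro r
  simp [hσ]

def RMono (row : Fin d → ℕ) (w : Word d NN) : Prop := ∀ r r', row r = row r' → r < r' → w r ≤ w r'

lemma cnt_row (w : Word d NN) (i : ℕ) (a : Fin NN) :
    cnt row w (i+1) a = cnt row w i a + (univ.filter fun r => row r = i ∧ w r ≤ a).card := by
  unfold cnt
  rw [← Finset.card_union_of_disjoint]
  · congr 1
    ext r
    simp only [mem_filter, mem_univ, true_and, mem_union]
    constructor
    · rintro ⟨h, h'⟩
      rcases Nat.lt_or_ge (row r) i with h3 | h3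
      · exact Or.inl ⟨h3, h'⟩
      · exact Or.inr ⟨by omega, h'⟩
    · rintro (⟨h, h'⟩ | ⟨h, h'⟩)
      · exact ⟨by omega, h'⟩
      · exact ⟨by omega, h'⟩
  · rw [Finset.disjoint_left]
    intro r
    simp only [mem_filter, mem_univ, true_and]
    rintro ⟨h, _⟩ ⟨h', _⟩
    omega

lemma rmono_le_iff {s : Word d NN} (hs : RMono row s) (r : Fin d) (a : Fin NN) :
    s r ≤ a ↔ (univ.filter fun r' => row r' = row r ∧ r' < r).card <
      (univ.filter fun r' => row r' = row r ∧ s r' ≤ a).card := by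
  constructor
  · intro h
    apply Finset.card_lt_card
    rw [Finset.ssubset_iff_of_subset]
    · exact ⟨r, by simp [h], by simp⟩
    · intro r'
      simp only [mem_filter, mem_univ, true_and]
      rintro ⟨h1, h2⟩
      exact ⟨h1, (hs _ _ h1 h2).trans h⟩
  · intro h
    by_contra hc
    push Not at hc
    apply absurd h
    rw [not_lt]
    apply Finset.card_le_card
    intro r'
    simp only [mem_filter, mem_univ, true_and]
    rintro ⟨h1, h2⟩
    refine ⟨h1, ?_⟩
    rcases lt_trichotomy r' r with h | h | h
    · exact h
    · subst h; exact absurd h2 (not_le.2 hc)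
    · exact absurd ((hs _ _ h1.symm h).trans h2) (not_le.2 hc)

lemma rmono_ext {s t : Word d NN} (hs : RMono row s) (ht : RMono row t)
    (h : ∀ p a, cnt row s p a = cnt row t p a) : s = t := by
  funext r
  have key : ∀ a, s r ≤ a ↔ t r ≤ a := by
    intro a
    rw [rmono_le_iff hs, rmono_le_iff ht]
    have h1 := cnt_row (row := row) s (row r) a
    have h2 := cnt_row (row := row) t (row r) a
    rw [h, h] at h1
    have : (univ.filter fun r' => row r' = row r ∧ s r' ≤ a).card =
      (univ.filter fun r' => row r' = row r ∧ t r' ≤ a).card := by omega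
    rw [this]
  exact le_antisymm ((key _).2 le_rfl) ((key _).1 le_rfl)

/-- column version -/
def ccnt (row col : Fin d → ℕ) (w : Word d NN) (j p : ℕ) (a : Fin NN) : ℕ :=
  (univ.filter fun r => col r = j ∧ row r < p ∧ w r ≤ a).card

lemma cnt_eq_sum (w : Word d NN) (p : ℕ) (a : Fin NN) :
    cnt row w p a = ∑ j ∈ univ.image col, ccnt row col w j p a := by
  unfold cnt ccnt
  rw [Finset.card_eq_sum_card_fiberwise (f := col) (t := univ.image col)]
  · refine sum_congr rfl fun j _ => ?_
    congr 1
    ext r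
    simp only [mem_filter, mem_univ, true_and]
    tauto
  · intro r _
    simp

def CMono (row col : Fin d → ℕ) (w : Word d NN) : Prop :=
  ∀ r r', col r = col r' → row r < row r' → w r ≤ w r'

lemma ccnt_le {t : Word d NN} (ht : CMono row col t) {τ : Equiv.Perm (Fin d)} (hτ : τ ∈ stabK col)
    (j p : ℕ) (a : Fin NN) : ccnt row col (t ∘ τ) j p a ≤ ccnt row col t j p a := by
  rw [mem_stabK] at hτ
  by_cases h : ∀ r, col r = j → row r < p → t r ≤ a
  · apply Finset.card_le_card
    intro r
    simp only [mem_filter, mem_univ, true_and]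
    rintro ⟨h1, h2, h3⟩
    exact ⟨h1, h2, h r h1 h2⟩
  · push Not at h
    obtain ⟨r, h1, h2, h3⟩ := h
    apply Finset.card_le_card_of_injOn τ
    · intro r'
      simp only [coe_filter, mem_univ, true_and, Set.mem_setOf_eq, Function.comp]
      rintro ⟨h4, h5, h6⟩
      refine ⟨by rw [hτ, h4], ?_, h6⟩
      by_contra hc
      have := ht r (τ r') (by rw [hτ, h4, h1]) (by omega)
      exact absurd (this.trans h6) (not_le.2 h3)
    · exact τ.injective.injOn

lemma cnt_comp_le {t : Word d NN} (ht : CMono row col t) {τ : Equiv.Perm (Fin d)}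
    (hτ : τ ∈ stabK col) (p : ℕ) (a : Fin NN) : cnt row (t ∘ τ) p a ≤ cnt row t p a := by
  rw [cnt_eq_sum (col := col), cnt_eq_sum (col := col)]
  exact sum_le_sum fun j _ => ccnt_le ht hτ j p a

lemma cnt_comp_eq (S : Shp row col) {t : Word d NN} (ht : CMono row col t)
    {τ : Equiv.Perm (Fin d)} (hτ : τ ∈ stabK col)
    (h : ∀ p a, cnt row (t ∘ τ) p a = cnt row t p a) : t ∘ τ = t := by
  have h1 : ∀ p a j, j ∈ univ.image col → ccnt row col (t ∘ τ) j p a = ccnt row col t j p a := by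
    intro p a
    have := h p a
    rw [cnt_eq_sum (col := col), cnt_eq_sum (col := col),
      Finset.sum_eq_sum_iff_of_le (fun j _ => ccnt_le ht hτ j p a)] at this
    exact this
  have h2 : ∀ (w : Word d NN) r a, ccnt row col w (col r) (row r + 1) a =
      ccnt row col w (col r) (row r) a + if w r ≤ a then 1 else 0 := by
    intro w r a
    unfold ccnt
    have : (univ.filter fun r' => col r' = col r ∧ row r' < row r + 1 ∧ w r' ≤ a) =
      (univ.filter fun r' => col r' = col r ∧ row r' < row r ∧ w r' ≤ a) ∪
      (if w r ≤ a then {r} else ∅) := by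
      ext r'
      simp only [mem_filter, mem_univ, true_and, mem_union]
      constructor
      · rintro ⟨h3, h4, h5⟩
        rcases Nat.lt_or_ge (row r') (row r) with h6 | h6
        · exact Or.inl ⟨h3, h6, h5⟩
        · have : r' = r := S.inj (by omega) h3
          subst this
          simp [h5]
      · rintro (⟨h3, h4, h5⟩ | h3)
        · exact ⟨h3, by omega, h5⟩
        · split_ifs at h3 with h4
          · simp at h3; subst h3; exact ⟨rfl, by omega, h4⟩
          · simp at h3
    rw [this, Finset.card_union_of_disjoint]
    · split_ifs <;> simp
    · split_ifs <;> simp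
  funext r
  have key : ∀ a, (t ∘ τ) r ≤ a ↔ t r ≤ a := by
    intro a
    have e1 := h2 (t ∘ τ) r a
    have e2 := h2 t r a
    rw [h1 _ _ _ (by simp), h1 _ _ _ (by simp)] at e1
    by_cases q1 : (t ∘ τ) r ≤ a <;> by_cases q2 : t r ≤ a <;> simp only [q1, q2, if_true, if_false] at e1 e2 ⊢ <;> omega
  exact le_antisymm ((key _).2 le_rfl) ((key _).1 le_rfl)

/-- Row sorting. -/
lemma exists_row_sort (S : Shp row col) (w : Word d NN) :
    ∃ σ ∈ stabK row, RMono row (w ∘ σ) := by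
  let f : Fin d → ℕ ×ₗ Fin NN := fun r => toLex (row r, w r)
  let σ := Tuple.sort f
  have hm : Monotone (f ∘ σ) := Tuple.monotone_sort f
  have hr : Monotone (row ∘ σ) := by
    intro a b hab
    have := hm hab
    simp only [f, Function.comp, Prod.Lex.toLex_le_toLex] at this
    rcases this with h | h
    · exact h.le
    · exact h.1.le
  have he : row ∘ σ = row := by
    have := Tuple.unique_monotone (f := row) (σ := σ) (τ := 1) hr (by simpa using S.mono)
    simpa using this
  refine ⟨σ, fun r => congrFun he r, ?_⟩
  intro r r' h1 h2
  have := hm h2.le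
  simp only [f, Function.comp, Prod.Lex.toLex_le_toLex] at this
  have e1 : row (σ r) = row r := congrFun he r
  have e2 : row (σ r') = row r' := congrFun he r'
  rcases this with h | h
  · omega
  · exact h.2

/-- total potential -/
def pot (row : Fin d → ℕ) (w : Word d NN) : ℕ :=
  ∑ p ∈ range (univ.sup row + 2), ∑ a, cnt row w p a

lemma cnt_big (w : Word d NN) (p : ℕ) (a : Fin NN) (hp : univ.sup row + 1 ≤ p) :
    cnt row w p a = cnt row w (univ.sup row + 1) a := by
  unfold cnt
  congr 1
  ext r
  have : row r ≤ univ.sup row := Finset.le_sup (mem_univ r)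
  simp only [mem_filter, mem_univ, true_and]
  constructor <;> rintro ⟨_, h⟩ <;> exact ⟨by omega, h⟩

lemma pot_lt {s t : Word d NN} (h : ∀ p a, cnt row s p a ≤ cnt row t p a)
    (hne : ¬ ∀ p a, cnt row s p a = cnt row t p a) : pot row s < pot row t := by
  push Not at hne
  obtain ⟨p, a, hpa⟩ := hne
  have : ∃ p ∈ range (univ.sup row + 2), cnt row s p a ≠ cnt row t p a := by
    by_cases hp : p < univ.sup row + 2
    · exact ⟨p, by simpa using hp, hpa⟩
    · refine ⟨univ.sup row + 1, by simp, ?_⟩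
      rwa [cnt_big s p a (by omega), cnt_big t p a (by omega)] at hpa
  obtain ⟨p, hp, hpa⟩ := this
  unfold pot
  apply Finset.sum_lt_sum
  · exact fun p _ => Finset.sum_le_sum fun a _ => h p a
  · exact ⟨p, hp, Finset.sum_lt_sum (fun a _ => h p a) ⟨a, mem_univ _, lt_of_le_of_ne (h p a) hpa⟩⟩

def RStd (pr : Fin NN → ZMod 2) (row col : Fin d → ℕ) (w : Word d NN) : Prop :=
  ∀ r r', row r = row r' → col r < col r' → w r ≤ w r' ∧ (w r = w r' → pr (w r) = 1)

def CStd (pr : Fin NN → ZMod 2) (row col : Fin d → ℕ) (w : Word d NN) : Prop :=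
  ∀ r r', col r = col r' → row r < row r' → w r ≤ w r' ∧ (w r = w r' → pr (w r) = 0)

/-- adjacent-to-global chain lemma -/
lemma chain_aux (A B : Fin d → ℕ) (z : ZMod 2) (pr : Fin NN → ZMod 2) (w : Word d NN)
    (inj : ∀ r r', A r = A r' → B r = B r' → r = r')
    (down : ∀ r j, j ≤ B r → ∃ r', A r' = A r ∧ B r' = j)
    (adj : ∀ r r', A r = A r' → B r' = B r + 1 → w r ≤ w r' ∧ (w r = w r' → pr (w r) = z)) :
    ∀ r r', A r = A r' → B r < B r' → w r ≤ w r' ∧ (w r = w r' → pr (w r) = z) := by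
  intro r r' hA hB
  obtain ⟨n, hn⟩ : ∃ n, B r' = B r + 1 + n := ⟨B r' - B r - 1, by omega⟩
  induction n generalizing r' with
  | zero => exact adj r r' hA hn
  | succ n ih =>
    obtain ⟨r'', h1, h2⟩ := down r' (B r + 1 + n) (by omega)
    obtain ⟨h3, h4⟩ := ih r'' (by omega) (by omega) h2
    obtain ⟨h5, h6⟩ := adj r'' r' h1 (by omega)
    refine ⟨h3.trans h5, fun h => ?_⟩
    exact h4 (le_antisymm h3 (by rw [h]; exact h5))

lemma rstd_of_adj (S : Shp row col) {pr : Fin NN → ZMod 2} {w : Word d NN}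
    (adj : ∀ r r', row r = row r' → col r' = col r + 1 → w r ≤ w r' ∧ (w r = w r' → pr (w r) = 1)) :
    RStd pr row col w :=
  chain_aux row col 1 pr w (fun _ _ h h' => S.inj h h') (fun r j h => S.down r _ _ le_rfl h) adj

lemma cstd_of_adj (S : Shp row col) {pr : Fin NN → ZMod 2} {w : Word d NN}
    (adj : ∀ r r', col r = col r' → row r' = row r + 1 → w r ≤ w r' ∧ (w r = w r' → pr (w r) = 0)) :
    CStd pr row col w :=
  chain_aux col row 0 pr w (fun _ _ h h' => S.inj h' h)
    (fun r j h => by obtain ⟨r', h1, h2⟩ := S.down r _ _ h le_rfl; exact ⟨r', h2, h1⟩) adj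

lemma RStd.rmono (S : Shp row col) {pr : Fin NN → ZMod 2} {w : Word d NN}
    (h : RStd pr row col w) : RMono row w := fun r r' h1 h2 => (h r r' h1 (S.lt _ _ h1 h2)).1

lemma CStd.cmono {pr : Fin NN → ZMod 2} {w : Word d NN}
    (h : CStd pr row col w) : CMono row col w := fun r r' h1 h2 => (h r r' h1 h2).1

lemma RStd.even (S : Shp row col) {pr : Fin NN → ZMod 2} {w : Word d NN}
    (h : RStd pr row col w) : ∀ r r', row r = row r' → w r = w r' → pr (w r) = 0 → r = r' := by
  intro r r' h1 h2 h3
  by_contra hne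
  rcases Nat.lt_trichotomy (col r) (col r') with h4 | h4 | h4
  · have := (h r r' h1 h4).2 h2; rw [h3] at this; exact absurd this (by decide)
  · exact hne (S.inj h1 h4)
  · have := (h r' r h1.symm h4).2 h2.symm; rw [← h2, h3] at this; exact absurd this (by decide)

lemma CStd.odd (S : Shp row col) {pr : Fin NN → ZMod 2} {w : Word d NN}
    (h : CStd pr row col w) : ∀ r r', col r = col r' → w r = w r' → pr (w r) = 1 → r = r' := by
  intro r r' h1 h2 h3
  by_contra hne
  rcases Nat.lt_trichotomy (row r) (row r') with h4 | h4 | h4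
  · have := (h r r' h1 h4).2 h2; rw [h3] at this; exact absurd this (by decide)
  · exact hne (S.inj h4 h1)
  · have := (h r' r h1.symm h4).2 h2.symm; rw [← h2, h3] at this; exact absurd this (by decide)

end comb
end SuperSchur

set_option linter.unusedSimpArgs false
set_option linter.unusedVariables false
open Finset
open scoped Classical

namespace SuperSchur
section strai
variable {k : Type} [Field k] {d NN : ℕ} {row col : Fin d → ℕ} {pr : Fin NN → ZMod 2}

/-- sign-invariants under the row group -/
def InvA (k : Type) [Field k] {d NN : ℕ} (pr : Fin NN → ZMod 2) (row : Fin d → ℕ) :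
    Submodule k (Tens k d NN) where
  carrier := {v | ∀ σ ∈ stabK row, act k pr σ v = chi k 1 σ • v}
  zero_mem' := by intro σ _; simp
  add_mem' := by
    intro a b ha hb σ hσ
    rw [map_add, ha σ hσ, hb σ hσ, smul_add]
  smul_mem' := by
    intro c a ha σ hσ
    rw [map_smul, ha σ hσ, smul_comm]

lemma mem_InvA {v : Tens k d NN} :
    v ∈ InvA k pr row ↔ ∀ σ ∈ stabK row, act k pr σ v = chi k 1 σ • v := Iff.rfl

/-- coinvariant relations for the column group -/
noncomputable def UC (k : Type) [Field k] {d NN : ℕ} (pr : Fin NN → ZMod 2) (col : Fin d → ℕ) :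
    Submodule k (Tens k d NN) :=
  ⨆ (τ : Equiv.Perm (Fin d)) (_ : τ ∈ stabK col), LinearMap.range (act k pr τ - LinearMap.id)

lemma sub_mem_UC {τ : Equiv.Perm (Fin d)} (hτ : τ ∈ stabK col) (v : Tens k d NN) :
    act k pr τ v - v ∈ UC k pr col := by
  have : LinearMap.range (act k pr τ - LinearMap.id) ≤ UC k pr col :=
    le_iSup₂_of_le τ hτ le_rfl
  exact this ⟨v, by simp⟩

lemma swap_mem_stabK {κ : Fin d → ℕ} {r r' : Fin d} (h : κ r = κ r') :
    Equiv.swap r r' ∈ stabK κ := by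
  rw [mem_stabK]
  intro s
  rw [Equiv.swap_apply_def]
  split_ifs with h1 h2
  · rw [h1, h]
  · rw [h2, h]
  · rfl

lemma chi_swap {r r' : Fin d} (h : r ≠ r') : chi k 1 (Equiv.swap r r') = -1 := by
  simp [chi, Equiv.Perm.sign_swap h]

lemma invA_vanish (h2 : (2 : k) ≠ 0) {v : Tens k d NN} (hv : v ∈ InvA k pr row)
    {w : Word d NN} {r r' : Fin d} (hne : r ≠ r') (hrow : row r = row r') (hw : w r = w r')
    (he : pr (w r) = 0) : v w = 0 := by
  have h := (inv_iff pr 1 _ v).1 (hv _ (swap_mem_stabK hrow)) w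
  have hc : w ∘ Equiv.swap r r' = w := by
    funext s
    simp only [Function.comp, Equiv.swap_apply_def]
    split_ifs with h1 h2
    · rw [h1, hw]
    · rw [h2, hw]
    · rfl
  rw [hc, cs, chi_swap hne, sgnF_fix] at h
  · have h3 : (2 : k) * v w = 0 := by linear_combination h
    exact (mul_eq_zero.1 h3).resolve_left h2
  · intro p hp
    rw [Equiv.swap_apply_def]
    split_ifs with h1 h2
    · subst h1; exact absurd he hp
    · subst h2; rw [← hw] at hp; exact absurd he hp
    · rfl

lemma Zv_mem_InvA (S : Shp row col) {t : Word d NN} (ht : RStd pr row col t) :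
    Zv pr k row 1 t ∈ InvA k pr row :=
  fun σ hσ => act_Zv (adm_sign (ht.even S)) hσ

lemma Zv_RStd (S : Shp row col) {s t : Word d NN} (hs : RStd pr row col s)
    (ht : RStd pr row col t) : Zv pr k row 1 t s = if t = s then 1 else 0 := by
  split_ifs with h
  · subst h; rw [Zv_apply, orb_self (adm_sign (ht.even S))]
  · by_contra hc
    rw [Zv_apply] at hc
    obtain ⟨σ, hσ, rfl⟩ := orb_ne_zero hc
    apply h
    exact rmono_ext (ht.rmono S) (hs.rmono S) (fun p a => (cnt_comp hσ t p a).symm)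

lemma invA_expand (S : Shp row col) (h2 : (2 : k) ≠ 0) {v : Tens k d NN} (hv : v ∈ InvA k pr row) :
    v = ∑ s ∈ univ.filter (RStd pr row col), v s • Zv pr k row 1 s := by
  rw [← sub_eq_zero]
  set u := v - ∑ s ∈ univ.filter (RStd pr row col), v s • Zv pr k row 1 s with hu
  have hA : u ∈ InvA k pr row := by
    apply Submodule.sub_mem _ hv
    apply Submodule.sum_mem
    intro s hs
    exact Submodule.smul_mem _ _ (Zv_mem_InvA S (by simpa using hs))
  have h1 : ∀ s, RMono row s → u s = 0 := by
    intro s hs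
    by_cases hst : RStd pr row col s
    · rw [hu, Finsupp.sub_apply, Finsupp.finsetSum_apply, Finset.sum_eq_single s]
      · rw [Finsupp.smul_apply, Zv_RStd S hst hst]; simp
      · intro t ht hne
        rw [Finsupp.smul_apply, Zv_RStd S hst (by simpa using ht), if_neg hne]; simp
      · intro h; simp [hst] at h
    · unfold RStd at hst
      push Not at hst
      obtain ⟨r, r', e1, e2, e3⟩ := hst
      have hlt := S.lt' e1 e2
      obtain ⟨e4, e5⟩ := e3 (hs r r' e1 hlt)
      exact invA_vanish h2 hA hlt.ne e1 e4 ((zmod2 _).resolve_right e5)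
  ext w
  obtain ⟨σ, hσ, hm⟩ := exists_row_sort S w
  have h := (inv_iff pr 1 _ u).1 (hA _ hσ) w
  rw [h1 _ hm] at h
  simpa using (mul_eq_zero.1 h.symm).resolve_left (cs_ne_zero _ _ _ _)

lemma card_split (P Q : Fin d → Prop) [DecidablePred P] [DecidablePred Q] : (univ.filter P).card =
    (univ.filter fun r => P r ∧ Q r).card + (univ.filter fun r => P r ∧ ¬ Q r).card := by
  rw [← Finset.filter_filter, ← Finset.filter_filter]
  exact (Finset.card_filter_add_card_filter_not _).symm

lemma trT_apply_ne {κ : Fin d → ℕ} {t s : Word d NN} {σ : Equiv.Perm (Fin d)}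
    (h : trT pr (Zv pr k κ 1 t) σ s ≠ 0) : ∃ π ∈ stabK κ, s ∘ σ = t ∘ π := by
  rw [trT] at h
  have h1 : act k pr σ⁻¹ (Zv pr k κ 1 t) s ≠ 0 := by
    intro hc; apply h; simp [hc]
  have h3 := act_apply_comp pr σ⁻¹ (Zv pr k κ 1 t) (s ∘ σ)
  have h4 : (s ∘ σ) ∘ (σ⁻¹ : Equiv.Perm (Fin d)) = s := by
    funext r; simp
  rw [h4] at h3
  rw [h3] at h1
  exact orb_ne_zero (right_ne_zero_of_mul h1)

lemma perm_back {σ : Equiv.Perm (Fin d)} {P : Fin d → Prop} (h : ∀ r, P r → P (σ r)) (r : Fin d)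
    (hr : P (σ r)) : P r := by
  have h1 : (univ.filter P).image σ = univ.filter P := by
    apply Finset.eq_of_subset_of_card_le
    · intro x hx
      rw [Finset.mem_image] at hx
      obtain ⟨y, hy, rfl⟩ := hx
      simp only [mem_filter, mem_univ, true_and] at hy ⊢
      exact h y hy
    · rw [Finset.card_image_of_injective _ σ.injective]
  have h3 : σ r ∈ (univ.filter P).image σ := by rw [h1]; simpa using hr
  rw [Finset.mem_image] at h3
  obtain ⟨y, hy, he⟩ := h3
  rw [← σ.injective he]
  simpa using hy

set_option maxHeartbeats 1600000 in
/-- The straightening relation. -/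
lemma straighten (S : Shp row col) (h2 : (2 : k) ≠ 0) {t : Word d NN} (ht : RStd pr row col t)
    (hnc : ¬ CStd pr row col t) :
    ∃ y : Tens k d NN, y ∈ InvA k pr row ∧ y ∈ UC k pr col ∧ y t = 1 ∧
      ∀ s, RStd pr row col s → y s ≠ 0 → s ≠ t → pot row t < pot row s := by
  have hv : ∃ b1 b2, col b1 = col b2 ∧ row b2 = row b1 + 1 ∧ t b2 ≤ t b1 ∧
      (t b2 = t b1 → pr (t b1) = 1) := by
    by_contra hc
    apply hnc
    apply cstd_of_adj S
    intro r r' h1 h3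
    by_contra h4
    apply hc
    refine ⟨r, r', h1, h3, ?_, ?_⟩
    · by_contra h5
      push Not at h5
      exact h4 ⟨h5.le, fun h => absurd h h5.ne⟩
    · intro h5
      rcases zmod2 (pr (t r)) with h6 | h6
      · exact absurd ⟨h5.symm.le, fun _ => h6⟩ h4
      · exact h6
  obtain ⟨b1, b2, hcol, hrow, hle, hodd⟩ := hv
  let inB : Fin d → Prop := fun r => (row r = row b1 ∧ t b1 ≤ t r) ∨ (row r = row b1 + 1 ∧ t r ≤ t b2)
  let κ : Fin d → ℕ := fun r => if inB r then 0 else row r + 1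
  have κB : ∀ r, inB r → κ r = 0 := fun r h => if_pos h
  have κN : ∀ r, ¬ inB r → κ r = row r + 1 := fun r h => if_neg h
  have κiff : ∀ {r r'}, κ r = κ r' → (inB r ↔ inB r') := by
    intro r r' h
    by_cases h1 : inB r <;> by_cases h3 : inB r'
    · tauto
    · rw [κB r h1, κN r' h3] at h; omega
    · rw [κN r h1, κB r' h3] at h; omega
    · tauto
  have κrow : ∀ {r r'}, κ r = κ r' → ¬ inB r → row r = row r' := by
    intro r r' h h1
    have h3 : ¬ inB r' := fun hc => h1 ((κiff h).2 hc)
    rw [κN r h1, κN r' h3] at h; omega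
  have adm : Adm pr k κ 1 t := by
    apply adm_sign
    intro r r' h1 h3 h4
    by_cases hB : inB r
    · have hB' := (κiff h1).1 hB
      have hx : ∀ p p', row p = row b1 → t b1 ≤ t p → row p' = row b1 + 1 → t p' ≤ t b2 →
          t p = t p' → pr (t p) = 1 := by
        intro p p' _ q1 _ q2 q3
        have e1 : t p = t b1 := le_antisymm (by rw [q3]; exact q2.trans hle) q1
        have e2 : t b2 = t b1 := le_antisymm hle (by rw [← e1, q3]; exact q2)
        rw [e1]; exact hodd e2
      rcases hB with ⟨a1, a2⟩ | ⟨a1, a2⟩ <;> rcases hB' with ⟨a3, a4⟩ | ⟨a3, a4⟩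
      · exact ht.even S r r' (by omega) h3 h4
      · have := hx r r' a1 a2 a3 a4 h3
        rw [h4] at this; exact absurd this (by decide)
      · have := hx r' r a3 a4 a1 a2 h3.symm
        rw [← h3, h4] at this; exact absurd this (by decide)
      · exact ht.even S r r' (by omega) h3 h4
    · exact ht.even S r r' (κrow h1 hB) h3 h4
  have hinv : ∀ π ∈ stabK κ, act k pr π (Zv pr k κ 1 t) = chi k 1 π • Zv pr k κ 1 t :=
    fun π hπ => act_Zv adm hπ
  refine ⟨trV pr (stabK row) (stabK κ) (Zv pr k κ 1 t), ?_, ?_, ?_, ?_⟩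
  · exact fun σ hσ => act_trV _ _ hinv hσ
  · -- each term lies in the relations
    unfold trV
    apply Submodule.sum_mem
    intro c _
    obtain ⟨σ, hσ⟩ := c.out
    simp only
    have hb1 : inB b1 := Or.inl ⟨rfl, le_rfl⟩
    have hb2 : inB b2 := Or.inr ⟨hrow, le_rfl⟩
    have hlt : ((univ.filter inB).image (fun r => col (σ r))).card < (univ.filter inB).card := by
      refine lt_of_le_of_lt (b := ((univ.filter inB).image col).card) ?_ ?_
      · apply Finset.card_le_card
        have hmem : ∀ p, row p = row b1 → col p ∈ (univ.filter inB).image col := by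
          intro p hp
          rw [Finset.mem_image]
          rcases Nat.lt_or_ge (col p) (col b1) with h | h
          · obtain ⟨r', q1, q2⟩ := S.down b2 (row b1 + 1) (col p) (by omega) (by omega)
            refine ⟨r', ?_, q2⟩
            simp only [mem_filter, mem_univ, true_and]
            exact Or.inr ⟨q1, (ht r' b2 (by omega) (by omega)).1⟩
          · refine ⟨p, ?_, rfl⟩
            simp only [mem_filter, mem_univ, true_and]
            refine Or.inl ⟨hp, ?_⟩
            rcases h.lt_or_eq with h | h
            · exact (ht b1 p hp.symm h).1
            · rw [S.inj hp.symm h]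
        intro j hj
        rw [Finset.mem_image] at hj
        obtain ⟨r, hr, rfl⟩ := hj
        simp only [mem_filter, mem_univ, true_and] at hr
        have hσr := mem_stabK.1 hσ r
        rcases hr with ⟨a1, _⟩ | ⟨a1, _⟩
        · exact hmem (σ r) (by omega)
        · obtain ⟨r', q1, q2⟩ := S.down (σ r) (row b1) (col (σ r)) (by omega) le_rfl
          rw [← q2]; exact hmem r' q1
      · refine lt_of_le_of_ne Finset.card_image_le ?_
        intro h
        rw [Finset.card_image_iff] at h
        have := h (by simpa using hb1) (by simpa using hb2) hcol
        rw [this] at hrow; omega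
    have hni : ∃ b b', inB b ∧ inB b' ∧ b ≠ b' ∧ col (σ b) = col (σ b') := by
      by_contra hc
      push Not at hc
      apply hlt.ne
      rw [Finset.card_image_iff]
      intro b hb b' hb' h
      by_contra hne
      exact hc b b' (by simpa using hb) (by simpa using hb') hne h
    obtain ⟨b, b', hb, hb', hne, hc⟩ := hni
    have hact : act k pr (Equiv.swap (σ b) (σ b')) (trT pr (Zv pr k κ 1 t) σ) =
        - trT pr (Zv pr k κ 1 t) σ := by
      have e1 : σ⁻¹ * Equiv.swap (σ b) (σ b') = Equiv.swap b b' * σ⁻¹ := by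
        rw [Equiv.swap_apply_apply]; group
      rw [trT, map_smul, ← act_mul, e1, act_mul,
        hinv _ (swap_mem_stabK (by rw [κB b hb, κB b' hb'])), chi_swap hne]
      simp
    have hU := sub_mem_UC (k := k) (pr := pr) (swap_mem_stabK (κ := col) hc) (trT pr (Zv pr k κ 1 t) σ)
    rw [hact] at hU
    have : trT pr (Zv pr k κ 1 t) σ = (-(2:k)⁻¹) • (- trT pr (Zv pr k κ 1 t) σ - trT pr (Zv pr k κ 1 t) σ) := by
      have : - trT pr (Zv pr k κ 1 t) σ - trT pr (Zv pr k κ 1 t) σ = (-(2:k)) • trT pr (Zv pr k κ 1 t) σ := by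
        module
      rw [this, smul_smul]
      field_simp
      simp
    rw [this]
    exact Submodule.smul_mem _ _ hU
  · -- coefficient of t
    have hkey : ∀ σ ∈ stabK row, ∀ π ∈ stabK κ, t ∘ σ = t ∘ π → σ ∈ stabK κ := by
      intro σ hσ π hπ he
      rw [mem_stabK] at hσ hπ
      have he' : ∀ r, t (σ r) = t (π r) := fun r => congrFun he r
      have hN : ∀ r, ¬ inB r → ¬ inB (σ r) := by
        intro r hr hr'
        have h1 := (κiff (hπ r)).not.2 hr
        have h3 := κrow (hπ r) h1
        rcases hr' with ⟨a1, a2⟩ | ⟨a1, a2⟩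
        · apply h1
          left
          rw [hσ] at a1
          exact ⟨by omega, by rw [← he']; exact a2⟩
        · apply h1
          right
          rw [hσ] at a1
          exact ⟨by omega, by rw [← he']; exact a2⟩
      have hN' : ∀ r, ¬ inB (σ r) → ¬ inB r := by
        intro r hr
        exact perm_back (P := fun r => ¬ inB r) hN r hr
      intro r
      by_cases hr : inB r
      · have : inB (σ r) := by by_contra hc; exact hN' r hc hr
        rw [κB r hr, κB _ this]
      · rw [κN r hr, κN _ (hN r hr), hσ]
    unfold trV
    rw [Finsupp.finsetSum_apply, Finset.sum_eq_single (QuotientGroup.mk (1 : stabK row))]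
    · have hm : ((QuotientGroup.mk (s := (stabK κ).subgroupOf (stabK row)) (1 : stabK row)).out :
          stabK row) ∈ (stabK κ).subgroupOf (stabK row) := by
        have := QuotientGroup.out_eq' (QuotientGroup.mk (s := (stabK κ).subgroupOf (stabK row)) (1 : stabK row))
        rw [eq_comm, QuotientGroup.eq] at this
        simpa using this
      rw [Subgroup.mem_subgroupOf] at hm
      rw [← one_mul (((QuotientGroup.mk (s := (stabK κ).subgroupOf (stabK row)) (1 : stabK row)).out :
          stabK row) : Equiv.Perm (Fin d)), trT_mul hinv 1 _ hm, trT, chi_one, inv_one, act_one, one_smul,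
        Zv_apply, orb_self adm]
    · intro c _ hc
      by_contra h0
      obtain ⟨π, hπ, he⟩ := trT_apply_ne h0
      apply hc
      have h1 := hkey _ c.out.2 π hπ he
      rw [← QuotientGroup.out_eq' c, eq_comm, QuotientGroup.eq]
      simpa [Subgroup.mem_subgroupOf] using h1
    · intro h; exact absurd (mem_univ _) h
  · intro s hs h0 hne
    have : ∃ σ ∈ stabK row, ∃ π ∈ stabK κ, s ∘ σ = t ∘ π := by
      unfold trV at h0
      rw [Finsupp.finsetSum_apply] at h0
      obtain ⟨c, _, hc⟩ := Finset.exists_ne_zero_of_sum_ne_zero h0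
      obtain ⟨π, hπ, he⟩ := trT_apply_ne hc
      exact ⟨_, c.out.2, π, hπ, he⟩
    obtain ⟨σ, hσ, π, hπ, he⟩ := this
    rw [mem_stabK] at hπ
    have hle2 : ∀ p a, cnt row t p a ≤ cnt row s p a := by
      intro p a
      rw [← cnt_comp hσ s, he]
      by_cases hp : p = row b1 + 1
      · unfold cnt
        rw [card_split _ inB, card_split (fun r => row r < p ∧ (t ∘ π) r ≤ a) inB]
        have e1 : (univ.filter fun r => (row r < p ∧ t r ≤ a) ∧ ¬ inB r).card =
            (univ.filter fun r => (row r < p ∧ (t ∘ π) r ≤ a) ∧ ¬ inB r).card := by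
          symm
          refine Finset.card_equiv π ?_
          intro r
          simp only [mem_filter, mem_univ, true_and, Function.comp]
          rw [κiff (hπ r)]
          by_cases hB : inB r
          · simp [hB]
          · have h1 := (κiff (hπ r)).not.2 hB
            rw [κrow (hπ r) h1]
        have e2 : (univ.filter fun r => (row r < p ∧ t r ≤ a) ∧ inB r).card ≤
            (univ.filter fun r => (row r < p ∧ (t ∘ π) r ≤ a) ∧ inB r).card := by
          by_cases hax : a < t b1
          · rw [Finset.card_eq_zero.2]
            · exact Nat.zero_le _
            · rw [Finset.filter_eq_empty_iff]
              rintro r - ⟨⟨a1, a2⟩, ⟨a3, a4⟩ | ⟨a3, a4⟩⟩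
              · exact absurd (a4.trans a2) (not_le.2 hax)
              · omega
          · push Not at hax
            have q1 := card_split (fun r => t r ≤ a ∧ inB r) (fun r => row r < p)
            have q2 := card_split (fun r => (t ∘ π) r ≤ a ∧ inB r) (fun r => row r < p)
            have q3 : (univ.filter (fun r => (t ∘ π) r ≤ a ∧ inB r)).card =
                (univ.filter (fun r => t r ≤ a ∧ inB r)).card := by
              refine Finset.card_equiv π ?_
              intro r
              simp only [mem_filter, mem_univ, true_and, Function.comp]
              rw [κiff (hπ r)]
            have q4 : (univ.filter (fun r => ((t ∘ π) r ≤ a ∧ inB r) ∧ ¬ row r < p)).card ≤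
                (univ.filter (fun r => (t r ≤ a ∧ inB r) ∧ ¬ row r < p)).card := by
              apply Finset.card_le_card
              intro r
              simp only [mem_filter, mem_univ, true_and]
              rintro ⟨⟨_, a2⟩, a3⟩
              refine ⟨⟨?_, a2⟩, a3⟩
              rcases a2 with ⟨a4, a5⟩ | ⟨a4, a5⟩
              · omega
              · exact a5.trans (hle.trans hax)
            have r1 : ∀ w : Word d NN, (univ.filter fun r => (row r < p ∧ w r ≤ a) ∧ inB r) =
                univ.filter fun r => (w r ≤ a ∧ inB r) ∧ row r < p := by
              intro w; ext r; simp only [mem_filter, mem_univ, true_and]; tauto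
            rw [r1, r1]
            omega
        omega
      · apply le_of_eq
        symm
        refine Finset.card_equiv π ?_
        intro r
        simp only [mem_filter, mem_univ, true_and, Function.comp]
        have : row r < p ↔ row (π r) < p := by
          by_cases hB : inB r
          · have hB' := (κiff (hπ r)).2 hB
            rcases hB with ⟨a1, _⟩ | ⟨a1, _⟩ <;> rcases hB' with ⟨a3, _⟩ | ⟨a3, _⟩ <;> omega
          · rw [κrow (hπ r).symm hB]
        rw [this]
    apply pot_lt hle2
    intro hall
    exact hne (rmono_ext (hs.rmono S) (ht.rmono S) (fun p a => (hall p a).symm))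

end strai
end SuperSchur

set_option linter.unusedSimpArgs false
set_option linter.unusedVariables false
open Finset
open scoped Classical

namespace SuperSchur
section core
variable {k : Type} [Field k] {d NN : ℕ} {row col : Fin d → ℕ} {pr : Fin NN → ZMod 2}

def Std (pr : Fin NN → ZMod 2) (row col : Fin d → ℕ) (w : Word d NN) : Prop :=
  RStd pr row col w ∧ CStd pr row col w

lemma Zv_mem_span (S : Shp row col) (h2 : (2 : k) ≠ 0) (t : Word d NN) (ht : RStd pr row col t) :
    Zv pr k row 1 t ∈ Submodule.span k (Zv pr k row 1 '' {s | Std pr row col s}) ⊔ UC k pr col := by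
  have wf : WellFounded (fun s t : Word d NN => pot row t < pot row s) := by
    have : IsTrans (Word d NN) (fun s t => pot row t < pot row s) := ⟨fun a b c h h' => h'.trans h⟩
    have : Std.Irrefl (fun s t : Word d NN => pot row t < pot row s) := ⟨fun a => lt_irrefl _⟩
    exact Finite.wellFounded_of_trans_of_irrefl _
  induction t using wf.induction with
  | _ t ih =>
  by_cases hc : CStd pr row col t
  · exact Submodule.mem_sup_left (Submodule.subset_span ⟨t, ⟨ht, hc⟩, rfl⟩)
  · obtain ⟨y, hA, hU, h1, hlt⟩ := straighten S h2 ht hc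
    have he := invA_expand S h2 hA
    rw [← Finset.add_sum_erase _ _ (a := t) (by simpa using ht), h1, one_smul] at he
    have : Zv pr k row 1 t = y - ∑ s ∈ (univ.filter (RStd pr row col)).erase t, y s • Zv pr k row 1 s :=
      eq_sub_of_add_eq he.symm
    rw [this]
    apply Submodule.sub_mem _ (Submodule.mem_sup_right hU)
    apply Submodule.sum_mem
    intro s hs
    simp only [mem_erase, mem_filter, mem_univ, true_and] at hs
    by_cases h0 : y s = 0
    · rw [h0, zero_smul]; exact Submodule.zero_mem _
    · exact Submodule.smul_mem _ _ (ih s (hlt s hs.2 h0 hs.1) hs.2)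

lemma invA_le (S : Shp row col) (h2 : (2 : k) ≠ 0) :
    InvA k pr row ≤ Submodule.span k (Zv pr k row 1 '' {s | Std pr row col s}) ⊔ UC k pr col := by
  intro v hv
  rw [invA_expand S h2 hv]
  apply Submodule.sum_mem
  intro s hs
  exact Submodule.smul_mem _ _ (Zv_mem_span S h2 s (by simpa using hs))

/-- Dual functionals. -/
noncomputable def phi (pr : Fin NN → ZMod 2) (k : Type) [Field k] (col : Fin d → ℕ) (t : Word d NN) :
    Tens k d NN →ₗ[k] k where
  toFun v := ∑ w, orb pr k col 0 t w * v w
  map_add' := by intro a b; simp [mul_add, sum_add_distrib]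
  map_smul' := by
    intro c a
    simp only [Finsupp.smul_apply, smul_eq_mul, RingHom.id_apply, mul_sum]
    exact sum_congr rfl fun w _ => by ring

lemma phi_apply (t : Word d NN) (v : Tens k d NN) :
    phi pr k col t v = ∑ w, orb pr k col 0 t w * v w := rfl

lemma phi_act (S : Shp row col) {t : Word d NN} (ht : CStd pr row col t) {τ : Equiv.Perm (Fin d)}
    (hτ : τ ∈ stabK col) (v : Tens k d NN) : phi pr k col t (act k pr τ v) = phi pr k col t v := by
  rw [phi_apply, phi_apply]
  rw [← Equiv.sum_comp (Equiv.arrowCongr τ.symm (Equiv.refl (Fin NN)))]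
  refine sum_congr rfl fun w _ => ?_
  have e : (Equiv.arrowCongr τ.symm (Equiv.refl (Fin NN))) w = w ∘ τ := by
    funext r; simp [Equiv.arrowCongr]
  rw [e, orb_comp (adm_triv (ht.odd S)) hτ, act_apply_comp]
  have := sgnF_sq (k := k) (fun s => pr (w s)) τ
  rw [cs, chi, pow_zero, one_mul]
  linear_combination (orb pr k col 0 t w * v w) * this

lemma phi_Zv_self (S : Shp row col) {t : Word d NN} (ht : Std pr row col t) :
    phi pr k col t (Zv pr k row 1 t) = 1 := by
  rw [phi_apply, Finset.sum_eq_single t]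
  · rw [orb_self (adm_triv (ht.2.odd S)), Zv_apply, orb_self (adm_sign (ht.1.even S)), one_mul]
  · intro w _ hne
    by_contra h
    obtain ⟨τ, hτ, rfl⟩ := orb_ne_zero (left_ne_zero_of_mul h)
    obtain ⟨σ, hσ, he⟩ := orb_ne_zero (right_ne_zero_of_mul h)
    apply hne
    apply cnt_comp_eq S ht.2.cmono hτ
    intro p a
    rw [he, cnt_comp hσ]
  · intro h; exact absurd (mem_univ _) h

lemma wtW_comp (w : Word d NN) (σ : Equiv.Perm (Fin d)) : wtW (w ∘ σ) = wtW w := by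
  funext a
  unfold wtW
  refine Finset.card_equiv σ ?_
  intro r
  simp

lemma phi_Zv_ne (S : Shp row col) {s t : Word d NN} (hs : Std pr row col s) (ht : Std pr row col t)
    (h : phi pr k col t (Zv pr k row 1 s) ≠ 0) :
    s = t ∨ (pot row s < pot row t ∧ wtW s = wtW t) := by
  rw [phi_apply] at h
  obtain ⟨w, _, hw⟩ := Finset.exists_ne_zero_of_sum_ne_zero h
  obtain ⟨τ, hτ, rfl⟩ := orb_ne_zero (left_ne_zero_of_mul hw)
  obtain ⟨σ, hσ, he⟩ := orb_ne_zero (right_ne_zero_of_mul hw)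
  have hc : ∀ p a, cnt row s p a ≤ cnt row t p a := by
    intro p a
    rw [← cnt_comp hσ, ← he]
    exact cnt_comp_le ht.2.cmono hτ p a
  by_cases hall : ∀ p a, cnt row s p a = cnt row t p a
  · exact Or.inl (rmono_ext (hs.1.rmono S) (ht.1.rmono S) hall)
  · refine Or.inr ⟨pot_lt hc hall, ?_⟩
    rw [← wtW_comp s σ, ← he, wtW_comp]

/-! Linear algebra -/

lemma tri {ι V : Type*} [Fintype ι] [AddCommGroup V] [Module k V] (z : ι → V) (ψ : ι → V →ₗ[k] k)
    (pt : ι → ℕ) (P : ι → Prop) (h1 : ∀ t, ψ t (z t) = 1)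
    (h3 : ∀ s t, P t → ψ t (z s) ≠ 0 → s = t ∨ (pt s < pt t ∧ P s)) (c : ι → k)
    (hc : ∀ t, P t → ψ t (∑ s, c s • z s) = 0) : ∀ t, P t → c t = 0 := by
  intro t
  induction hn : pt t using Nat.strong_induction_on generalizing t with
  | _ n ih =>
  intro hP
  have := hc t hP
  rw [map_sum, Finset.sum_eq_single t] at this
  · simpa [h1] using this
  · intro s _ hne
    rw [map_smul, smul_eq_mul]
    by_cases h : ψ t (z s) = 0
    · rw [h, mul_zero]
    · rcases h3 s t hP h with h4 | ⟨h4, h5⟩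
      · exact absurd h4 hne
      · rw [ih (pt s) (by omega) s rfl h5, zero_mul]
  · intro h; exact absurd (mem_univ _) h

lemma dim_count {ι V W : Type*} [Fintype ι] [DecidableEq W] [AddCommGroup V] [Module k V] (z : ι → V)
    (ψ : ι → V →ₗ[k] k) (pt : ι → ℕ) (wt : ι → W) (h1 : ∀ t, ψ t (z t) = 1)
    (h3 : ∀ s t, ψ t (z s) ≠ 0 → s = t ∨ (pt s < pt t ∧ wt s = wt t))
    (M : Submodule k V) (hM : M = Submodule.span k (Set.range z)) (Wt : W → Submodule k V)
    (hz : ∀ t, z t ∈ Wt (wt t)) (hψ : ∀ t μ, wt t ≠ μ → ∀ x ∈ Wt μ, ψ t x = 0) (μ : W) :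
    Module.finrank k ↥(M ⊓ Wt μ) = (univ.filter fun t => wt t = μ).card := by
  have hli : LinearIndependent k z := by
    rw [Fintype.linearIndependent_iff]
    intro c hc t
    refine tri z ψ pt (fun _ => True) h1 ?_ c ?_ t trivial
    · intro s t _ h
      rcases h3 s t h with h | h
      · exact Or.inl h
      · exact Or.inr ⟨h.1, trivial⟩
    · intro t _; rw [hc, map_zero]
  have he : M ⊓ Wt μ = Submodule.span k (Set.range fun t : {t // wt t = μ} => z t) := by
    apply le_antisymm
    · rintro x ⟨hx1, hx2⟩
      rw [hM] at hx1
      obtain ⟨c, rfl⟩ := (Submodule.mem_span_range_iff_exists_fun k).1 hx1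
      have h0 := tri z ψ pt (fun t => wt t ≠ μ) h1 (by
        intro s t hP h
        rcases h3 s t h with h | h
        · exact Or.inl h
        · exact Or.inr ⟨h.1, by rw [h.2]; exact hP⟩) c (fun t ht => hψ t μ ht _ hx2)
      apply Submodule.sum_mem
      intro t _
      by_cases h : wt t = μ
      · exact Submodule.smul_mem _ _ (Submodule.subset_span ⟨⟨t, h⟩, rfl⟩)
      · rw [h0 t h, zero_smul]; exact Submodule.zero_mem _
    · rw [Submodule.span_le]
      rintro _ ⟨⟨t, rfl⟩, rfl⟩
      refine ⟨?_, hz t⟩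
      rw [hM]; exact Submodule.subset_span ⟨t, rfl⟩
  rw [he]
  have hli' : LinearIndependent k (fun t : {t // wt t = μ} => z t) :=
    hli.comp _ Subtype.val_injective
  rw [finrank_span_eq_card hli', Fintype.card_subtype]

/-! The diagonal twist -/

noncomputable def dl (pr : Fin NN → ZMod 2) (k : Type) [Field k] (col : Fin d → ℕ) (w : Word d NN) : k :=
  ∏ r, (-1 : k) ^ ((pr (w r)).val * col r)

lemma dl_sq (w : Word d NN) : dl pr k col w * dl pr k col w = 1 := by
  rw [dl, ← prod_mul_distrib]
  exact prod_eq_one fun r _ => neg_one_pow_mul_self _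

lemma dl_comp (w : Word d NN) (σ : Equiv.Perm (Fin d)) :
    dl pr k col (w ∘ σ) = ∏ r, (-1 : k) ^ ((pr (w r)).val * col (σ⁻¹ r)) := by
  rw [dl, ← Equiv.prod_comp σ (fun r => (-1 : k) ^ ((pr (w r)).val * col (σ⁻¹ r)))]
  refine prod_congr rfl fun r _ => ?_
  simp

noncomputable def Dm (pr : Fin NN → ZMod 2) (k : Type) [Field k] (col : Fin d → ℕ) :
    Tens k d NN →ₗ[k] Tens k d NN where
  toFun v := Finsupp.equivFunOnFinite.symm fun w => dl pr k col w * v w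
  map_add' := by intro a b; ext w; simp [mul_add]
  map_smul' := by intro c a; ext w; simp; ring

lemma Dm_apply (v : Tens k d NN) (w : Word d NN) : Dm pr k col v w = dl pr k col w * v w := rfl

lemma Dm_Dm (v : Tens k d NN) : Dm pr k col (Dm pr k col v) = v := by
  ext w
  rw [Dm_apply, Dm_apply, ← mul_assoc, dl_sq, one_mul]

lemma Dm_act {τ : Equiv.Perm (Fin d)} (hτ : τ ∈ stabK col) (v : Tens k d NN) :
    Dm pr k col (act k pr τ v) = act k pr τ (Dm pr k col v) := by
  have h : ∀ w, Dm pr k col (act k pr τ v) (w ∘ τ) = act k pr τ (Dm pr k col v) (w ∘ τ) := by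
    intro w
    rw [Dm_apply, act_apply_comp, act_apply_comp, Dm_apply, dl_comp, dl]
    have : ∀ r, col (τ⁻¹ r) = col r := mem_stabK.1 (inv_mem hτ)
    simp only [this]
    ring
  ext w
  have := h (w ∘ (τ⁻¹ : Equiv.Perm (Fin d)))
  have e : (w ∘ (τ⁻¹ : Equiv.Perm (Fin d))) ∘ τ = w := by funext r; simp
  rwa [e] at this

lemma Shp.pos_add (S : Shp row col) {r r' : Fin d} (h : row r = row r') :
    (r : ℕ) + col r' = r' + col r := by
  have key : ∀ n, ∀ r r' : Fin d, row r = row r' → col r' = col r + n → (r' : ℕ) = r + n := by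
    intro n
    induction n with
    | zero => intro r r' h1 h2; rw [S.inj h1 h2.symm]; rfl
    | succ n ih =>
      intro r r' h1 h2
      obtain ⟨r'', q1, q2⟩ := S.down r' (row r') (col r + n) le_rfl (by omega)
      have h3 := ih r r'' (by omega) q2
      have h4 : r'' < r' := S.lt' q1 (by omega)
      by_contra hne
      have h5 : (r'' : ℕ) + 1 < r' := by have : (r'' : ℕ) < r' := h4; omega
      let x : Fin d := ⟨r'' + 1, by omega⟩
      have x1 : r'' < x := by show (r'' : ℕ) < r'' + 1; omega
      have x2 : x < r' := h5
      have y1 := S.mono x1.le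
      have y2 := S.mono x2.le
      have z1 := S.lt r'' x (by omega) x1
      have z2 := S.lt x r' (by omega) x2
      omega
  rcases Nat.le_total (col r) (col r') with h1 | h1
  · have := key (col r' - col r) r r' h (by omega); omega
  · have := key (col r - col r') r' r h.symm (by omega); omega

lemma Dm_inv (S : Shp row col) {σ : Equiv.Perm (Fin d)} (hσ : σ ∈ stabK row) (v : Tens k d NN) :
    act k (fun j => pr j + 1) σ v = v ↔
      act k pr σ (Dm pr k col v) = chi k 1 σ • Dm pr k col v := by
  have e : act k (fun j => pr j + 1) σ v = v ↔ act k (fun j => pr j + 1) σ v = chi k 0 σ • v := by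
    simp [chi]
  rw [e, inv_iff, inv_iff]
  refine forall_congr' fun w => ?_
  rw [Dm_apply, Dm_apply]
  have h1 : cs (fun j => pr j + 1) k 0 σ w = cs pr k 1 σ w * (dl pr k col w * dl pr k col (w ∘ σ)) := by
    rw [cs, cs, sgnF_add_one (k := k) (fun s => pr (w s)) σ, dl_comp, dl, ← prod_mul_distrib, chi, chi,
      pow_zero, pow_one, one_mul]
    congr 1
    refine prod_congr rfl fun p _ => ?_
    rw [← pow_add, ← mul_add]
    rcases zmod2 (pr (w p)) with h | h
    · simp [h]
    · have h5 := S.pos_add (mem_stabK.1 (inv_mem hσ) p)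
      have hv : (pr (w p)).val = 1 := by rw [h]; rfl
      rw [hv, one_mul, one_mul]
      rw [neg_one_pow_eq_pow_mod_two, neg_one_pow_eq_pow_mod_two (n := col p + _)]
      congr 1
      omega
  rw [h1]
  have s1 := dl_sq (k := k) (pr := pr) (col := col) w
  have s2 := dl_sq (k := k) (pr := pr) (col := col) (w ∘ σ)
  constructor
  · intro h; rw [h]
    linear_combination (cs pr k 1 σ w * dl pr k col w * v w) * s2
  · intro h
    linear_combination dl pr k col (w ∘ σ) * h - v (w ∘ σ) * s2

end core
end SuperSchur

set_option linter.unusedSimpArgs false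
set_option linter.unusedVariables false
open Finset
open scoped Classical

namespace SuperSchur
section shape
variable (q : ℕ) (lam : ℕ → ℕ)

lemma mem_cellsF' {q : ℕ} {lam mu : ℕ → ℕ} {p : ℕ × ℕ} :
    p ∈ cellsF q lam mu ↔ p.1 < q ∧ mu p.1 ≤ p.2 ∧ p.2 < lam p.1 := by
  unfold cellsF
  simp only [mem_filter, mem_product, mem_range]
  constructor
  · rintro ⟨⟨h1, h2⟩, h3, h4⟩; exact ⟨h1, h3, h4⟩
  · rintro ⟨h1, h2, h3⟩
    refine ⟨⟨h1, lt_of_lt_of_le h3 ?_⟩, h2, h3⟩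
    exact Finset.le_sup (f := lam) (mem_range.2 h1)

lemma exists_cellOf {q : ℕ} {lam mu : ℕ → ℕ} {p : ℕ × ℕ} (hp : p ∈ cellsF q lam mu) :
    ∃ r, cellOf q lam mu r = p := by
  have : toLex p ∈ cellsRL q lam mu := by
    simp only [cellsRL, Finset.mem_map, Equiv.toEmbedding_apply]
    exact ⟨p, hp, rfl⟩
  refine ⟨(oR q lam mu).symm ⟨toLex p, this⟩, ?_⟩
  rw [cellOf, OrderIso.apply_symm_apply]
  rfl

lemma cellOf_inj {q : ℕ} {lam mu : ℕ → ℕ} : Function.Injective (cellOf q lam mu) := by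
  intro r r' h
  apply (oR q lam mu).injective
  apply Subtype.ext
  exact ofLex.injective h

lemma cellOf_lt {q : ℕ} {lam mu : ℕ → ℕ} {r r' : Fin (dOf q lam mu)} (h : r < r') :
    rowOf q lam mu r < rowOf q lam mu r' ∨
      (rowOf q lam mu r = rowOf q lam mu r' ∧ colOf q lam mu r < colOf q lam mu r') := by
  have h1 : (oR q lam mu r) < (oR q lam mu r') := (oR q lam mu).lt_iff_lt.2 h
  have h2 : (oR q lam mu r).val < (oR q lam mu r').val := h1
  rw [Prod.Lex.lt_iff] at h2
  exact h2

lemma shp_of (hlam : Antitone lam) :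
    Shp (rowOf q lam (fun _ => 0)) (colOf q lam (fun _ => 0)) where
  mono := by
    intro r r' h
    rcases h.lt_or_eq with h | h
    · rcases cellOf_lt h with h | h
      · exact h.le
      · exact h.1.le
    · rw [h]
  lt := by
    intro r r' h1 h2
    rcases cellOf_lt h2 with h | h
    · omega
    · exact h.2
  down := by
    intro r i j hi hj
    have := mem_cellsF'.1 (cellOf_mem q lam (fun _ => 0) r)
    have h3 := hlam hi
    have : (i, j) ∈ cellsF q lam (fun _ => 0) := by
      rw [mem_cellsF']
      unfold rowOf at hi h3; unfold colOf at hj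
      exact ⟨by simp only; omega, by simp, by simp only; omega⟩
    obtain ⟨r', hr'⟩ := exists_cellOf this
    exact ⟨r', by rw [rowOf, hr'], by rw [colOf, hr']⟩

lemma cellOf_sigma (mu : ℕ → ℕ) (s : Fin (dOf q lam mu)) :
    cellOf q lam mu (sigmaRC q lam mu s) = cellC q lam mu s := by
  have : sigmaRC q lam mu s = (oR q lam mu).symm ⟨toLex (cellC q lam mu s), by
    simp only [cellsRL, Finset.mem_map, Equiv.toEmbedding_apply]
    exact ⟨cellC q lam mu s, cellC_mem q lam mu s, rfl⟩⟩ := rfl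
  rw [cellOf, this, OrderIso.apply_symm_apply]
  rfl

lemma colPermC_iff (mu : ℕ → ℕ) (τ : Equiv.Perm (Fin (dOf q lam mu))) :
    ColPermC q lam mu τ ↔ sigmaRC q lam mu * τ * (sigmaRC q lam mu)⁻¹ ∈ stabK (colOf q lam mu) := by
  rw [mem_stabK]
  unfold ColPermC
  constructor
  · intro h r
    have := h ((sigmaRC q lam mu)⁻¹ r)
    rw [← cellOf_sigma, ← cellOf_sigma] at this
    simpa [colOf] using this
  · intro h s
    have := h (sigmaRC q lam mu s)
    rw [← cellOf_sigma, ← cellOf_sigma]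
    simpa [colOf] using this

end shape

section transfer
variable {k : Type} [Field k] {q : ℕ} {lam : ℕ → ℕ} {NN : ℕ} {par : Fin NN → ZMod 2}


lemma mem_GammaPi (S : Shp (rowOf q lam (fun _ => 0)) (colOf q lam (fun _ => 0))) (v : Tens k (dOf q lam (fun _ => 0)) NN) :
    v ∈ GammaPi k q lam (fun _ => 0) par ↔ Dm par k (colOf q lam (fun _ => 0)) v ∈ InvA k par (rowOf q lam (fun _ => 0)) := by
  unfold GammaPi
  simp only [Submodule.mem_iInf, LinearMap.mem_eqLocus, LinearMap.id_apply]
  rw [mem_InvA]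
  refine forall_congr' fun σ => ?_
  constructor
  · intro h hσ; exact (Dm_inv S hσ v).1 (h hσ)
  · intro h hσ; exact (Dm_inv S hσ v).2 (h hσ)

lemma Urel_le (N : Submodule k (Tens k (dOf q lam (fun _ => 0)) NN))
    (h : ∀ τ, ColPermC q lam (fun _ => 0) τ → ∀ v, act k par τ v - v ∈ N) :
    Urel k q lam (fun _ => 0) par ≤ N := by
  unfold Urel
  refine iSup₂_le fun τ hτ => ?_
  rintro _ ⟨v, rfl⟩
  exact h τ hτ v

lemma mem_Urel (τ) (hτ : ColPermC q lam (fun _ => 0) τ) (v) :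
    act k par τ v - v ∈ Urel k q lam (fun _ => 0) par := by
  unfold Urel
  exact Submodule.mem_iSup_of_mem τ (Submodule.mem_iSup_of_mem hτ ⟨v, rfl⟩)

lemma theta_apply (v : Tens k (dOf q lam (fun _ => 0)) NN) :
    theta k q lam (fun _ => 0) par v =
      (Urel k q lam (fun _ => 0) par).mkQ (act k par (sigmaRC q lam (fun _ => 0)) v) := by
  unfold theta; rfl

lemma theta_UC {v : Tens k (dOf q lam (fun _ => 0)) NN} (hv : v ∈ UC k par (colOf q lam (fun _ => 0))) :
    theta k q lam (fun _ => 0) par (Dm par k (colOf q lam (fun _ => 0)) v) = 0 := by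
  have : UC k par (colOf q lam (fun _ => 0)) ≤ LinearMap.ker (theta k q lam (fun _ => 0) par ∘ₗ Dm par k (colOf q lam (fun _ => 0))) := by
    unfold UC
    refine iSup₂_le fun τ hτ => ?_
    rintro _ ⟨u, rfl⟩
    rw [LinearMap.mem_ker, LinearMap.comp_apply, LinearMap.sub_apply, LinearMap.id_apply, map_sub,
      Dm_act hτ, theta_apply, map_sub, ← act_mul]
    set σ := sigmaRC q lam (fun _ => 0)
    have e : τ * σ = σ * (σ⁻¹ * τ * σ) := by group
    rw [e, act_mul, Submodule.mkQ_apply, Submodule.Quotient.mk_eq_zero]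
    apply mem_Urel
    rw [colPermC_iff]
    convert hτ using 1
    show σ * (σ⁻¹ * τ * σ) * σ⁻¹ = τ
    group
  exact this hv

/-- functional on the quotient -/
noncomputable def psi (S : Shp (rowOf q lam (fun _ => 0)) (colOf q lam (fun _ => 0))) (t : {t : Word (dOf q lam (fun _ => 0)) NN // Std par (rowOf q lam (fun _ => 0)) (colOf q lam (fun _ => 0)) t}) :
    (Tens k (dOf q lam (fun _ => 0)) NN ⧸ Urel k q lam (fun _ => 0) par) →ₗ[k] k :=
  (Urel k q lam (fun _ => 0) par).liftQ
    (phi par k (colOf q lam (fun _ => 0)) t.1 ∘ₗ Dm par k (colOf q lam (fun _ => 0)) ∘ₗ act k par (sigmaRC q lam (fun _ => 0))⁻¹) (by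
    apply Urel_le
    intro τ hτ v
    rw [colPermC_iff] at hτ
    set σ := sigmaRC q lam (fun _ => 0)
    rw [LinearMap.mem_ker, LinearMap.comp_apply, LinearMap.comp_apply, map_sub, ← act_mul]
    have e : τ * σ⁻¹ = σ⁻¹ * (σ * τ * σ⁻¹) := by group
    rw [e, act_mul, map_sub, Dm_act hτ, map_sub, phi_act S t.2.2 hτ, sub_self])

lemma psi_mkQ (S : Shp (rowOf q lam (fun _ => 0)) (colOf q lam (fun _ => 0))) (t : {t : Word (dOf q lam (fun _ => 0)) NN // Std par (rowOf q lam (fun _ => 0)) (colOf q lam (fun _ => 0)) t}) (v) :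
    psi (k := k) S t ((Urel k q lam (fun _ => 0) par).mkQ v) =
    phi par k (colOf q lam (fun _ => 0)) t.1 (Dm par k (colOf q lam (fun _ => 0)) (act k par (sigmaRC q lam (fun _ => 0))⁻¹ v)) := by
  unfold psi
  rw [Submodule.mkQ_apply, Submodule.liftQ_apply]
  rfl

lemma psi_theta (S : Shp (rowOf q lam (fun _ => 0)) (colOf q lam (fun _ => 0))) (t : {t : Word (dOf q lam (fun _ => 0)) NN // Std par (rowOf q lam (fun _ => 0)) (colOf q lam (fun _ => 0)) t}) (v) :
    psi (k := k) S t (theta k q lam (fun _ => 0) par (Dm par k (colOf q lam (fun _ => 0)) v)) = phi par k (colOf q lam (fun _ => 0)) t.1 v := by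
  rw [theta_apply, psi_mkQ, ← act_mul, mul_inv_cancel, act_one, Dm_Dm]

lemma mem_WtSpan {d : ℕ} {μ : Fin NN → ℕ} {v : Tens k d NN} :
    v ∈ WtSpan k d NN μ ↔ ∀ w, v w ≠ 0 → wtW w = μ := by
  unfold WtSpan
  constructor
  · intro h
    induction h using Submodule.span_induction with
    | mem x hx =>
      obtain ⟨w, h1, rfl⟩ := hx
      intro w' h'
      rw [Finsupp.single_apply] at h'
      split_ifs at h' with h3
      · rw [← h3, h1]
      · exact absurd rfl h'
    | zero => intro w h; simp at h
    | add x y _ _ hx hy =>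
      intro w h
      by_cases h1 : x w = 0
      · apply hy; intro h3; apply h; simp [h1, h3]
      · exact hx w h1
    | smul c x _ hx =>
      intro w h
      apply hx; intro h3; apply h; simp [h3]
  · intro h
    rw [← Finsupp.sum_single v]
    apply Submodule.sum_mem
    intro w hw
    rw [← mul_one (v w), ← smul_eq_mul, ← Finsupp.smul_single]
    apply Submodule.smul_mem
    exact Submodule.subset_span ⟨w, h w (by simpa using hw), rfl⟩

lemma act_ne {d : ℕ} {σ : Equiv.Perm (Fin d)} {v : Tens k d NN} {w : Word d NN}
    (h : act k par σ v w ≠ 0) : v (w ∘ (σ⁻¹ : Equiv.Perm (Fin d))) ≠ 0 := by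
  have := act_apply_comp par σ v (w ∘ (σ⁻¹ : Equiv.Perm (Fin d)))
  have e : (w ∘ (σ⁻¹ : Equiv.Perm (Fin d))) ∘ σ = w := by funext r; simp
  rw [e] at this
  rw [this] at h
  exact right_ne_zero_of_mul h

lemma SHat_eq (h2 : (2 : k) ≠ 0) (S : Shp (rowOf q lam (fun _ => 0)) (colOf q lam (fun _ => 0))) : SHat k q lam (fun _ => 0) par =
    Submodule.span k (Set.range fun t : {t : Word (dOf q lam (fun _ => 0)) NN // Std par (rowOf q lam (fun _ => 0)) (colOf q lam (fun _ => 0)) t} =>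
      theta k q lam (fun _ => 0) par (Dm par k (colOf q lam (fun _ => 0)) (Zv par k (rowOf q lam (fun _ => 0)) 1 t.1))) := by
  unfold SHat
  apply le_antisymm
  · rintro _ ⟨v, hv, rfl⟩
    have hv' := (mem_GammaPi S v).1 hv
    obtain ⟨a, ha, b, hb, hab⟩ := Submodule.mem_sup.1 (invA_le S h2 hv')
    rw [← Dm_Dm (pr := par) (col := (colOf q lam (fun _ => 0))) v, ← hab, map_add, map_add, theta_UC hb, add_zero]
    clear hab
    induction ha using Submodule.span_induction with
    | mem x hx =>
      obtain ⟨t, ht, rfl⟩ := hx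
      exact Submodule.subset_span ⟨⟨t, ht⟩, rfl⟩
    | zero => simp
    | add x y _ _ hx hy => rw [map_add, map_add]; exact Submodule.add_mem _ hx hy
    | smul c x _ hx => rw [map_smul, map_smul]; exact Submodule.smul_mem _ _ hx
  · rw [Submodule.span_le]
    rintro _ ⟨t, rfl⟩
    refine ⟨_, ?_, rfl⟩
    show _ ∈ GammaPi k q lam (fun _ => 0) par
    rw [mem_GammaPi S, Dm_Dm]
    exact Zv_mem_InvA S t.2.1

lemma finrank_SHatWt (h2 : (2 : k) ≠ 0) (S : Shp (rowOf q lam (fun _ => 0)) (colOf q lam (fun _ => 0))) (μ : Fin NN → ℕ) :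
    Module.finrank k ↥(SHatWt k q lam (fun _ => 0) par μ) =
      (univ.filter fun t : {t : Word (dOf q lam (fun _ => 0)) NN // Std par (rowOf q lam (fun _ => 0)) (colOf q lam (fun _ => 0)) t} =>
        wtW t.1 = μ).card := by
  unfold SHatWt
  have key := dim_count (k := k)
    (ι := {t : Word (dOf q lam (fun _ => 0)) NN //
      Std par (rowOf q lam (fun _ => 0)) (colOf q lam (fun _ => 0)) t})
    (V := Tens k (dOf q lam (fun _ => 0)) NN ⧸ Urel k q lam (fun _ => 0) par)
    (fun t => theta k q lam (fun _ => 0) par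
      (Dm par k (colOf q lam (fun _ => 0)) (Zv par k (rowOf q lam (fun _ => 0)) 1 t.1)))
    (psi S) (fun t => pot (rowOf q lam (fun _ => 0)) t.1) (fun t => wtW t.1) ?_ ?_
    (SHat k q lam (fun _ => 0) par) (SHat_eq h2 S)
    (fun μ => Submodule.map (Urel k q lam (fun _ => 0) par).mkQ
      (WtSpan k (dOf q lam (fun _ => 0)) NN μ)) ?_ ?_ μ
  · exact key
  · intro t; rw [psi_theta, phi_Zv_self S t.2]
  · intro s t h
    rw [psi_theta] at h
    rcases phi_Zv_ne S s.2 t.2 h with h | h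
    · exact Or.inl (Subtype.ext h)
    · exact Or.inr h
  · intro t
    rw [theta_apply]
    refine ⟨_, ?_, rfl⟩
    show _ ∈ WtSpan k _ NN _
    rw [mem_WtSpan]
    intro w hw
    have h1 := act_ne hw
    rw [Dm_apply] at h1
    obtain ⟨σ, _, he⟩ := orb_ne_zero (right_ne_zero_of_mul h1)
    rw [← wtW_comp w _, he, wtW_comp]
  · rintro t μ hne _ ⟨v, hv, rfl⟩
    rw [psi_mkQ, phi_apply]
    apply Finset.sum_eq_zero
    intro w _
    by_contra h
    obtain ⟨σ, _, he⟩ := orb_ne_zero (left_ne_zero_of_mul h)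
    have h1 := right_ne_zero_of_mul h
    rw [Dm_apply] at h1
    have h3 := act_ne (right_ne_zero_of_mul h1)
    have hv' : v ∈ WtSpan k _ NN μ := hv
    have h4 := mem_WtSpan.1 hv' _ h3
    apply hne
    rw [← h4, wtW_comp, he, wtW_comp]

lemma chSHat_eq (h2 : (2 : k) ≠ 0) (hlam : Antitone lam) :
    chSHat k q lam (fun _ => 0) par =
      ∑ t ∈ univ.filter (fun t : Word (dOf q lam (fun _ => 0)) NN => Std par (rowOf q lam (fun _ => 0)) (colOf q lam (fun _ => 0)) t),
        ∏ r, (MvPolynomial.X (t r) : MvPolynomial (Fin NN) ℤ) := by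
  have S := shp_of q lam hlam
  unfold chSHat
  have hmon : ∀ t : Word (dOf q lam (fun _ => 0)) NN, ∏ r, (MvPolynomial.X (t r) : MvPolynomial (Fin NN) ℤ)
      = MvPolynomial.monomial (Finsupp.equivFunOnFinite.symm (wtW t)) 1 := by
    intro t
    rw [MvPolynomial.monomial_eq, MvPolynomial.C_1, one_mul, Finsupp.prod_fintype _ _ (by simp),
      Finset.prod_comp (fun a => (MvPolynomial.X a : MvPolynomial (Fin NN) ℤ)) t]
    rw [← Finset.prod_subset (Finset.subset_univ (univ.image t))]
    · refine prod_congr rfl fun a _ => ?_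
      simp [wtW]
    · intro a _ ha
      have : wtW t a = 0 := by
        unfold wtW
        rw [Finset.card_eq_zero, Finset.filter_eq_empty_iff]
        intro r _ hr
        exact ha (by rw [Finset.mem_image]; exact ⟨r, mem_univ _, hr⟩)
      simp [this]
  simp only [hmon]
  rw [← Finset.sum_fiberwise_of_maps_to (g := fun t => wtW t) (t := Finset.image (fun w => wtW w) univ)
    (fun t _ => Finset.mem_image_of_mem _ (mem_univ t))]
  refine sum_congr rfl fun μ _ => ?_
  rw [finrank_SHatWt h2 S, Finset.sum_congr rfl (g := fun _ => MvPolynomial.monomial (Finsupp.equivFunOnFinite.symm μ) 1)]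
  · rw [Finset.sum_const, nsmul_eq_mul]
    congr 1
    rw [MvPolynomial.C_eq_coe_nat]
    congr 1
    rw [← Finset.card_map (Function.Embedding.subtype _)]
    congr 1
    ext t
    simp [and_comm]
  · intro t ht
    simp only [mem_filter] at ht
    rw [ht.2]

end transfer
end SuperSchur

set_option linter.unusedSimpArgs false
set_option linter.unusedVariables false
open Finset
open scoped Classical

namespace SuperSchur
section hook
variable {q m n : ℕ} {lam : ℕ → ℕ}

lemma lt_conjOf (hlam : Antitone lam) (i j : ℕ) : i < conjOf q lam j ↔ i < q ∧ j < lam i := by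
  unfold conjOf
  constructor
  · intro h
    by_contra hc
    apply absurd h
    rw [not_lt]
    calc _ ≤ (range i).card := by
          apply Finset.card_le_card
          intro i'
          simp only [mem_filter, mem_range]
          rintro ⟨h1, h2⟩
          by_contra h3
          apply hc
          push Not at h3
          exact ⟨by omega, lt_of_lt_of_le h2 (hlam h3)⟩
      _ = i := card_range i
  · rintro ⟨h1, h2⟩
    calc i < (range (i+1)).card := by simp
      _ ≤ _ := by
          apply Finset.card_le_card
          intro i'
          simp only [mem_filter, mem_range]
          intro h3
          exact ⟨by omega, lt_of_lt_of_le h2 (hlam (by omega))⟩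

lemma conj_antitone : Antitone (conjOf q lam) := by
  intro a b hab
  unfold conjOf
  apply Finset.card_le_card
  intro i
  simp only [mem_filter, mem_range]
  rintro ⟨h1, h2⟩
  exact ⟨h1, by omega⟩

lemma mem_conj_cells (hlam : Antitone lam) (i j : ℕ) :
    (j, i) ∈ cellsF (lam 0) (conjOf q lam) (fun _ => 0) ↔ (i, j) ∈ cellsF q lam (fun _ => 0) := by
  rw [mem_cellsF', mem_cellsF']
  simp only [zero_le, true_and]
  rw [lt_conjOf hlam]
  constructor
  · rintro ⟨_, h⟩; exact h
  · intro h; exact ⟨lt_of_lt_of_le h.2 (hlam (Nat.zero_le _)), h⟩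

/-- Hook-standard fillings. -/
def HStd (m n q : ℕ) (lam : ℕ → ℕ) (T : ↥(cellsF q lam (fun _ => 0)) → Fin (m + n)) : Prop :=
  (∀ c c' : ↥(cellsF q lam (fun _ => 0)), c.1.1 = c'.1.1 → c'.1.2 = c.1.2 + 1 →
    T c ≤ T c' ∧ (T c = T c' → (T c : ℕ) < m)) ∧
  (∀ c c' : ↥(cellsF q lam (fun _ => 0)), c.1.2 = c'.1.2 → c'.1.1 = c.1.1 + 1 →
    T c ≤ T c' ∧ (T c = T c' → m ≤ (T c : ℕ)))

/-- positions as cells -/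
noncomputable def posE (hlam : Antitone lam) :
    Fin (dOf (lam 0) (conjOf q lam) (fun _ => 0)) ≃ ↥(cellsF q lam (fun _ => 0)) :=
  Equiv.ofBijective (fun r => ⟨(cellOf (lam 0) (conjOf q lam) (fun _ => 0) r).swap, by
    rw [← Prod.mk.eta (p := Prod.swap _), ← mem_conj_cells hlam]
    exact cellOf_mem _ _ _ r⟩) (by
    constructor
    · intro r r' h
      apply cellOf_inj
      exact Prod.swap_injective (congrArg Subtype.val h)
    · rintro ⟨⟨i, j⟩, h⟩
      obtain ⟨r, hr⟩ := exists_cellOf ((mem_conj_cells hlam i j).2 h)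
      exact ⟨r, Subtype.ext (by simp [hr])⟩)

lemma posE_fst (hlam : Antitone lam) (r) :
    (posE (q := q) hlam r).1.1 = colOf (lam 0) (conjOf q lam) (fun _ => 0) r := rfl

lemma posE_snd (hlam : Antitone lam) (r) :
    (posE (q := q) hlam r).1.2 = rowOf (lam 0) (conjOf q lam) (fun _ => 0) r := rfl

lemma std_iff (hlam : Antitone lam) (T : ↥(cellsF q lam (fun _ => 0)) → Fin (m + n)) :
    Std (fun j : Fin (m + n) => if (j : ℕ) < m then (0 : ZMod 2) else 1)
      (rowOf (lam 0) (conjOf q lam) (fun _ => 0)) (colOf (lam 0) (conjOf q lam) (fun _ => 0))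
      (T ∘ posE hlam) ↔ HStd m n q lam T := by
  have S := shp_of (lam 0) (conjOf q lam) conj_antitone
  have p0 : ∀ a : Fin (m + n), (if (a : ℕ) < m then (0 : ZMod 2) else 1) = 0 ↔ (a : ℕ) < m := by
    intro a; split_ifs with h <;> simp [h]
  have p1 : ∀ a : Fin (m + n), (if (a : ℕ) < m then (0 : ZMod 2) else 1) = 1 ↔ m ≤ (a : ℕ) := by
    intro a
    split_ifs with h
    · simp [h]
    · simp; omega
  constructor
  · rintro ⟨hR, hC⟩
    constructor
    · intro c c' h1 h2
      obtain ⟨r, rfl⟩ := (posE hlam).surjective c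
      obtain ⟨r', rfl⟩ := (posE hlam).surjective c'
      rw [posE_fst, posE_fst] at h1
      rw [posE_snd, posE_snd] at h2
      have := hC r r' h1 (by omega)
      rw [p0] at this
      exact this
    · intro c c' h1 h2
      obtain ⟨r, rfl⟩ := (posE hlam).surjective c
      obtain ⟨r', rfl⟩ := (posE hlam).surjective c'
      rw [posE_snd, posE_snd] at h1
      rw [posE_fst, posE_fst] at h2
      have := hR r r' h1 (by omega)
      rw [p1] at this
      exact this
  · rintro ⟨h1, h2⟩
    constructor
    · apply rstd_of_adj S
      intro r r' e1 e2
      have := h2 (posE hlam r) (posE hlam r') e1 e2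
      rw [p1]
      exact this
    · apply cstd_of_adj S
      intro r r' e1 e2
      have := h1 (posE hlam r) (posE hlam r') e1 e2
      rw [p0]
      exact this

lemma sum_std_eq (hlam : Antitone lam) :
    ∑ t ∈ univ.filter (fun t : Word (dOf (lam 0) (conjOf q lam) (fun _ => 0)) (m + n) =>
        Std (fun j : Fin (m + n) => if (j : ℕ) < m then (0 : ZMod 2) else 1)
        (rowOf (lam 0) (conjOf q lam) (fun _ => 0)) (colOf (lam 0) (conjOf q lam) (fun _ => 0)) t),
        ∏ r, (MvPolynomial.X (t r) : MvPolynomial (Fin (m + n)) ℤ) =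
    ∑ T ∈ univ.filter (HStd m n q lam), ∏ c, (MvPolynomial.X (T c) : MvPolynomial (Fin (m + n)) ℤ) := by
  symm
  refine Finset.sum_nbij' (fun T => T ∘ posE hlam) (fun t => t ∘ (posE hlam).symm) ?_ ?_ ?_ ?_ ?_
  · intro T hT
    simp only [mem_filter, mem_univ, true_and] at hT ⊢
    exact (std_iff hlam T).2 hT
  · intro t ht
    simp only [mem_filter, mem_univ, true_and] at ht ⊢
    rw [← std_iff hlam]
    convert ht using 1
    funext r; simp
  · intro T _; funext c; simp
  · intro t _; funext c; simp
  · intro T _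
    rw [← Equiv.prod_comp (posE hlam)]
    rfl

lemma muOf_le (f : (i : Fin q) → Fin (lam i + 1)) (i : ℕ) : muOf q lam f i ≤ lam i := by
  unfold muOf
  split_ifs with h
  · have := (f ⟨i, h⟩).2; simp only at this; omega
  · omega

lemma muOf_anti {f : (i : Fin q) → Fin (lam i + 1)}
    (hf : ∀ i j : Fin q, i ≤ j → (f j : ℕ) ≤ (f i : ℕ)) : Antitone (muOf q lam f) := by
  intro i j hij
  unfold muOf
  split_ifs with h1 h2
  · exact hf ⟨i, h2⟩ ⟨j, h1⟩ hij
  · omega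
  · omega
  · omega

def Match (f : (i : Fin q) → Fin (lam i + 1)) (T : ↥(cellsF q lam (fun _ => 0)) → Fin (m + n)) : Prop :=
  ∀ c, (T c : ℕ) < m ↔ c.1.2 < muOf q lam f c.1.1

lemma exists_match (hlam : Antitone lam) {T : ↥(cellsF q lam (fun _ => 0)) → Fin (m + n)}
    (hT : HStd m n q lam T) :
    ∃ f : (i : Fin q) → Fin (lam i + 1), (∀ i j : Fin q, i ≤ j → (f j : ℕ) ≤ (f i : ℕ)) ∧ Match f T := by
  have key : ∀ i : Fin q, ∃ k : Fin (lam i + 1), ∀ j, (∃ h : ((i : ℕ), j) ∈ cellsF q lam (fun _ => 0),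
      (T ⟨_, h⟩ : ℕ) < m) ↔ j < k := by
    intro i
    let P : ℕ → Prop := fun j => ∃ h : ((i : ℕ), j) ∈ cellsF q lam (fun _ => 0), (T ⟨_, h⟩ : ℕ) < m
    have hnot : ¬ P (lam i) := by
      rintro ⟨h, _⟩
      rw [mem_cellsF'] at h
      simp at h
    have hstep : ∀ j, P (j+1) → P j := by
      rintro j ⟨h, h1⟩
      have h3 : ((i : ℕ), j) ∈ cellsF q lam (fun _ => 0) := by
        rw [mem_cellsF'] at h ⊢
        simp only at h ⊢
        exact ⟨h.1, by omega, by omega⟩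
      refine ⟨h3, lt_of_le_of_lt ?_ h1⟩
      exact (hT.1 ⟨_, h3⟩ ⟨_, h⟩ rfl rfl).1
    have hdown : ∀ a b, a ≤ b → P b → P a := by
      intro a b hab
      induction hab with
      | refl => exact id
      | step _ ih => exact fun h => ih (hstep _ h)
    have hex : ∃ j, ¬ P j := ⟨_, hnot⟩
    refine ⟨⟨Nat.find hex, Nat.lt_succ_of_le (Nat.find_min' hex hnot)⟩, fun j => ?_⟩
    constructor
    · intro h
      by_contra hc
      exact Nat.find_spec hex (hdown _ _ (not_lt.1 hc) h)
    · intro h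
      by_contra hc
      exact Nat.find_min hex h hc
  choose f hf using key
  have hM : Match f T := by
    rintro ⟨⟨i, j⟩, h⟩
    have hi : i < q := (mem_cellsF'.1 h).1
    have h1 := hf ⟨i, hi⟩ j
    simp only [muOf, hi, dif_pos]
    rw [← h1]
    exact ⟨fun h2 => ⟨h, h2⟩, fun ⟨_, h2⟩ => h2⟩
  refine ⟨f, ?_, hM⟩
  have hanti : Antitone (muOf q lam f) := by
    apply antitone_nat_of_succ_le
    intro i
    by_contra hc
    push Not at hc
    have hi : i + 1 < q := by
      by_contra h
      simp [muOf, h] at hc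
    have l1 := muOf_le f (i+1)
    have l2 := hlam (Nat.le_succ i)
    have c1 : (i, muOf q lam f i) ∈ cellsF q lam (fun _ => 0) := by
      rw [mem_cellsF']
      exact ⟨by simp only; omega, by simp, by simp only [Nat.succ_eq_add_one] at *; omega⟩
    have c2 : (i + 1, muOf q lam f i) ∈ cellsF q lam (fun _ => 0) := by
      rw [mem_cellsF']
      exact ⟨by simp only; omega, by simp, by simp only; omega⟩
    have a1 := (hM ⟨_, c1⟩).not.2 (by simp)
    have a2 := (hM ⟨_, c2⟩).2 hc
    have a3 : (T ⟨_, c1⟩ : ℕ) ≤ T ⟨_, c2⟩ := (hT.2 ⟨_, c1⟩ ⟨_, c2⟩ rfl rfl).1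
    omega
  intro i j hij
  have := hanti (show (i : ℕ) ≤ j from hij)
  simpa [muOf] using this

lemma match_unique {T : ↥(cellsF q lam (fun _ => 0)) → Fin (m + n)}
    {f g : (i : Fin q) → Fin (lam i + 1)} (hf : Match f T) (hg : Match g T) : f = g := by
  have key : ∀ f g : (i : Fin q) → Fin (lam i + 1), Match f T → Match g T → ∀ i, ¬ (f i : ℕ) < g i := by
    intro f g hf hg i hlt
    have c1 : ((i : ℕ), (f i : ℕ)) ∈ cellsF q lam (fun _ => 0) := by
      rw [mem_cellsF']
      have := (g i).2
      exact ⟨i.2, by simp, by simp only; omega⟩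
    have a1 := (hf ⟨_, c1⟩).not.2 (by simp [muOf])
    have a2 := (hg ⟨_, c1⟩).2 (by simpa [muOf] using hlt)
    exact a1 a2
  funext i
  apply Fin.ext
  have := key f g hf hg i
  have := key g f hg hf i
  omega

section glue
variable (f : (i : Fin q) → Fin (lam i + 1))

lemma mem_muCells {c : ℕ × ℕ} : c ∈ cellsF q (muOf q lam f) (fun _ => 0) ↔
    c ∈ cellsF q lam (fun _ => 0) ∧ c.2 < muOf q lam f c.1 := by
  rw [mem_cellsF', mem_cellsF']
  have := muOf_le f c.1
  constructor
  · rintro ⟨h1, h2, h3⟩; exact ⟨⟨h1, h2, by omega⟩, h3⟩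
  · rintro ⟨⟨h1, h2, _⟩, h3⟩; exact ⟨h1, h2, h3⟩

lemma mem_skew {c : ℕ × ℕ} : c ∈ conjSkewCells q lam (muOf q lam f) ↔
    c.swap ∈ cellsF q lam (fun _ => 0) ∧ ¬ c.1 < muOf q lam f c.2 := by
  unfold conjSkewCells
  rw [Finset.mem_image]
  constructor
  · rintro ⟨x, hx, rfl⟩
    rw [Finset.mem_sdiff, mem_muCells] at hx
    rw [Prod.swap_swap]
    exact ⟨hx.1, fun h => hx.2 ⟨hx.1, h⟩⟩
  · rintro ⟨h1, h2⟩
    refine ⟨c.swap, ?_, Prod.swap_swap _⟩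
    rw [Finset.mem_sdiff, mem_muCells]
    exact ⟨h1, fun h => h2 h.2⟩

noncomputable def glueE : (↥(cellsF q (muOf q lam f) (fun _ => 0)) ⊕ ↥(conjSkewCells q lam (muOf q lam f))) ≃
    ↥(cellsF q lam (fun _ => 0)) :=
  Equiv.ofBijective (Sum.elim (fun c => ⟨c.1, ((mem_muCells f).1 c.2).1⟩)
    (fun c => ⟨c.1.swap, ((mem_skew f).1 c.2).1⟩)) (by
    constructor
    · rintro (⟨a, ha⟩ | ⟨a, ha⟩) (⟨b, hb⟩ | ⟨b, hb⟩) h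
      · simpa using h
      · have h' : a = b.swap := congrArg Subtype.val h
        have h1 := ((mem_muCells f).1 ha).2
        have h2 := ((mem_skew f).1 hb).2
        rw [h'] at h1
        exact absurd h1 h2
      · have h' : a.swap = b := congrArg Subtype.val h
        have h1 := ((mem_muCells f).1 hb).2
        have h2 := ((mem_skew f).1 ha).2
        rw [← h'] at h1
        exact absurd h1 h2
      · have h' : a.swap = b.swap := congrArg Subtype.val h
        have := Prod.swap_injective h'
        subst this; rfl
    · rintro ⟨c, hc⟩
      by_cases h : c.2 < muOf q lam f c.1
      · exact ⟨Sum.inl ⟨c, (mem_muCells f).2 ⟨hc, h⟩⟩, rfl⟩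
      · exact ⟨Sum.inr ⟨c.swap, (mem_skew f).2 ⟨by rwa [Prod.swap_swap], h⟩⟩,
          Subtype.ext (Prod.swap_swap _)⟩)

lemma glueE_inl (c) : (glueE f (Sum.inl c)).1 = c.1 := rfl
lemma glueE_inr (c) : (glueE f (Sum.inr c)).1 = c.1.swap := rfl

noncomputable def glue (p : (↥(cellsF q (muOf q lam f) (fun _ => 0)) → Fin m) ×
    (↥(conjSkewCells q lam (muOf q lam f)) → Fin n)) :
    ↥(cellsF q lam (fun _ => 0)) → Fin (m + n) :=
  Sum.elim (fun c => Fin.castAdd n (p.1 c)) (fun c => Fin.natAdd m (p.2 c)) ∘ (glueE f).symm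

lemma glue_inl (p : (↥(cellsF q (muOf q lam f) (fun _ => 0)) → Fin m) ×
    (↥(conjSkewCells q lam (muOf q lam f)) → Fin n)) (c) :
    glue f p (glueE f (Sum.inl c)) = Fin.castAdd n (p.1 c) := by simp [glue]

lemma glue_inr (p : (↥(cellsF q (muOf q lam f) (fun _ => 0)) → Fin m) ×
    (↥(conjSkewCells q lam (muOf q lam f)) → Fin n)) (c) :
    glue f p (glueE f (Sum.inr c)) = Fin.natAdd m (p.2 c) := by simp [glue]

lemma glue_std (hf : ∀ i j : Fin q, i ≤ j → (f j : ℕ) ≤ (f i : ℕ))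
    (p : (↥(cellsF q (muOf q lam f) (fun _ => 0)) → Fin m) ×
    (↥(conjSkewCells q lam (muOf q lam f)) → Fin n))
    (h1 : SSYTpred _ p.1) (h2 : SSYTpred _ p.2) : HStd m n q lam (glue f p) := by
  have hanti := muOf_anti hf
  constructor
  · intro c c' e1 e2
    obtain ⟨x, rfl⟩ := (glueE f).surjective c
    obtain ⟨x', rfl⟩ := (glueE f).surjective c'
    rcases x with x | x <;> rcases x' with x' | x' <;> simp only [glue_inl, glue_inr] <;>
      simp only [glueE_inl, glueE_inr, Prod.fst_swap, Prod.snd_swap] at e1 e2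
    · have := h1.1 x x' e1 e2
      exact ⟨this, fun _ => (p.1 x).2⟩
    · refine ⟨?_, fun _ => (p.1 x).2⟩
      have := (p.1 x).2
      rw [Fin.le_def, Fin.val_castAdd, Fin.val_natAdd]; omega
    · have a1 := ((mem_muCells f).1 x'.2).2
      have a2 := ((mem_skew f).1 x.2).2
      rw [e1] at a2
      omega
    · have h := h2.2 x x' e1 e2
      have h' : (p.2 x : ℕ) < p.2 x' := h
      rw [Fin.le_def, Fin.ext_iff, Fin.val_natAdd, Fin.val_natAdd]
      exact ⟨by omega, fun _ => by omega⟩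
  · intro c c' e1 e2
    obtain ⟨x, rfl⟩ := (glueE f).surjective c
    obtain ⟨x', rfl⟩ := (glueE f).surjective c'
    rcases x with x | x <;> rcases x' with x' | x' <;> simp only [glue_inl, glue_inr] <;>
      simp only [glueE_inl, glueE_inr, Prod.fst_swap, Prod.snd_swap] at e1 e2
    · have h := h1.2 x x' e1 e2
      have h' : (p.1 x : ℕ) < p.1 x' := h
      rw [Fin.le_def, Fin.ext_iff, Fin.val_castAdd, Fin.val_castAdd]
      exact ⟨by omega, fun _ => by omega⟩
    · have := (p.1 x).2
      rw [Fin.le_def, Fin.ext_iff, Fin.val_castAdd, Fin.val_natAdd]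
      exact ⟨by omega, fun _ => by omega⟩
    · have a1 := ((mem_muCells f).1 x'.2).2
      have a2 := ((mem_skew f).1 x.2).2
      have a3 := hanti (show x.1.2 ≤ x'.1.1 by omega)
      omega
    · have h := h2.1 x x' e1 e2
      have h' : (p.2 x : ℕ) ≤ p.2 x' := h
      rw [Fin.le_def, Fin.ext_iff, Fin.val_natAdd, Fin.val_natAdd]
      exact ⟨by omega, fun _ => by omega⟩

lemma glue_match (p : (↥(cellsF q (muOf q lam f) (fun _ => 0)) → Fin m) ×
    (↥(conjSkewCells q lam (muOf q lam f)) → Fin n)) : Match f (glue f p) := by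
  intro c
  obtain ⟨x, rfl⟩ := (glueE f).surjective c
  rcases x with x | x
  · rw [glue_inl, glueE_inl]
    exact ⟨fun _ => ((mem_muCells f).1 x.2).2, fun _ => (p.1 x).2⟩
  · rw [glue_inr, glueE_inr]
    refine ⟨fun h => ?_, fun h => absurd h ((mem_skew f).1 x.2).2⟩
    rw [Fin.val_natAdd] at h; omega

lemma sum_match (hf : ∀ i j : Fin q, i ≤ j → (f j : ℕ) ≤ (f i : ℕ)) :
    ∑ T ∈ univ.filter (fun T => HStd m n q lam T ∧ Match f T),
      ∏ c, (MvPolynomial.X (T c) : MvPolynomial (Fin (m + n)) ℤ) =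
    tabPoly (cellsF q (muOf q lam f) (fun _ => 0)) (Fin.castAdd n) *
      tabPoly (conjSkewCells q lam (muOf q lam f)) (Fin.natAdd m) := by
  unfold tabPoly
  rw [Finset.sum_mul_sum, ← Finset.sum_product']
  symm
  refine Finset.sum_nbij (glue f) ?_ ?_ ?_ ?_
  · intro p hp
    simp only [mem_product, mem_filter, mem_univ, true_and] at hp ⊢
    exact ⟨glue_std f hf p hp.1 hp.2, glue_match f p⟩
  · intro p _ p' _ h
    apply Prod.ext
    · funext c
      have := congrFun h (glueE f (Sum.inl c))
      rw [glue_inl, glue_inl] at this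
      exact Fin.castAdd_injective _ _ this
    · funext c
      have := congrFun h (glueE f (Sum.inr c))
      rw [glue_inr, glue_inr] at this
      exact Fin.natAdd_injective _ _ this
  · intro T hT
    simp only [coe_filter, mem_univ, true_and, Set.mem_ofPred_eq] at hT
    obtain ⟨hS, hM⟩ := hT
    have m1 : ∀ c, (T (glueE f (Sum.inl c)) : ℕ) < m := fun c =>
      (hM _).2 ((mem_muCells f).1 c.2).2
    have m2 : ∀ c, m ≤ (T (glueE f (Sum.inr c)) : ℕ) := fun c => by
      by_contra h
      exact ((mem_skew f).1 c.2).2 ((hM (glueE f (Sum.inr c))).1 (not_le.1 h))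
    let T1 : ↥(cellsF q (muOf q lam f) (fun _ => 0)) → Fin m := fun c => ⟨_, m1 c⟩
    let T2 : ↥(conjSkewCells q lam (muOf q lam f)) → Fin n := fun c =>
      ⟨(T (glueE f (Sum.inr c)) : ℕ) - m, by have := (T (glueE f (Sum.inr c))).2; have := m2 c; omega⟩
    refine ⟨(T1, T2), ?_, ?_⟩
    · simp only [coe_product, coe_filter, mem_univ, true_and, Set.mem_prod, Set.mem_ofPred_eq]
      refine ⟨⟨?_, ?_⟩, ⟨?_, ?_⟩⟩
      · intro c c' e1 e2
        exact (hS.1 (glueE f (Sum.inl c)) (glueE f (Sum.inl c')) e1 e2).1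
      · intro c c' e1 e2
        obtain ⟨a, b⟩ := hS.2 (glueE f (Sum.inl c)) (glueE f (Sum.inl c')) e1 e2
        have h1 := m1 c
        refine lt_of_le_of_ne (show T1 c ≤ T1 c' from a) ?_
        intro h
        have h' : (T (glueE f (Sum.inl c)) : ℕ) = T (glueE f (Sum.inl c')) :=
          congrArg (fun x : Fin m => (x : ℕ)) h
        have := b (Fin.ext h')
        omega
      · intro c c' e1 e2
        have a := (hS.2 (glueE f (Sum.inr c)) (glueE f (Sum.inr c')) e1 e2).1
        show (T (glueE f (Sum.inr c)) : ℕ) - m ≤ (T (glueE f (Sum.inr c')) : ℕ) - m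
        exact Nat.sub_le_sub_right a m
      · intro c c' e1 e2
        obtain ⟨a, b⟩ := hS.1 (glueE f (Sum.inr c)) (glueE f (Sum.inr c')) e1 e2
        have h1 := m2 c
        have a' : (T (glueE f (Sum.inr c)) : ℕ) ≤ (T (glueE f (Sum.inr c')) : ℕ) := a
        show (T (glueE f (Sum.inr c)) : ℕ) - m < (T (glueE f (Sum.inr c')) : ℕ) - m
        by_contra hc
        have := b (Fin.ext (by omega))
        omega
    · funext c
      obtain ⟨x, rfl⟩ := (glueE f).surjective c
      rcases x with x | x
      · rw [glue_inl]; rfl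
      · rw [glue_inr]
        apply Fin.ext
        have := m2 x
        show m + ((T (glueE f (Sum.inr x)) : ℕ) - m) = _
        omega
  · intro p _
    rw [← Equiv.prod_comp (glueE f), Fintype.prod_sum_type]
    simp only [glue_inl, glue_inr]

end glue

lemma sum_hstd (hlam : Antitone lam) :
    ∑ T ∈ univ.filter (HStd m n q lam), ∏ c, (MvPolynomial.X (T c) : MvPolynomial (Fin (m + n)) ℤ)
      = hookSchur q m n lam := by
  unfold hookSchur
  rw [Finset.sum_congr rfl (g := fun f => ∑ T ∈ univ.filter (fun T => HStd m n q lam T ∧ Match f T),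
      ∏ c, (MvPolynomial.X (T c) : MvPolynomial (Fin (m + n)) ℤ))]
  · rw [Finset.sum_comm' (t' := univ.filter (HStd m n q lam))
      (s' := fun T => univ.filter fun f : (i : Fin q) → Fin (lam i + 1) =>
        (∀ i j : Fin q, i ≤ j → (f j : ℕ) ≤ (f i : ℕ)) ∧ Match f T)]
    · refine sum_congr rfl fun T hT => ?_
      simp only [mem_filter, mem_univ, true_and] at hT
      obtain ⟨f, h1, h2⟩ := exists_match hlam hT
      have : (univ.filter fun f : (i : Fin q) → Fin (lam i + 1) =>
        (∀ i j : Fin q, i ≤ j → (f j : ℕ) ≤ (f i : ℕ)) ∧ Match f T) = {f} := by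
        ext g
        simp only [mem_filter, mem_univ, true_and, mem_singleton]
        constructor
        · rintro ⟨_, h⟩; exact match_unique h h2
        · rintro rfl; exact ⟨h1, h2⟩
      rw [this, Finset.sum_singleton]
    · intro f T
      simp only [mem_filter, mem_univ, true_and]
      tauto
  · intro f hf
    simp only [mem_filter, mem_univ, true_and] at hf
    exact (sum_match f hf).symm

end hook

end SuperSchur

namespace SuperSchur

/-- The formal character of the Schur supermodule `Ŝ_λ(k^{m|n})`
equals the hook Schur function `hs_λ(x₁,…,x_m; y₁,…,y_n)`.  Here `Ŝ_λ(k^{m|n})` is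
realized, via the standard basis theorem, as the Schur supermodule attached to the
conjugate shape `λ'` in the word model, with the alphabet `[m+n]` graded so that the
first `m` letters are even and the last `n` are odd. -/
theorem character_eq_hookSchur
    (k : Type) [Field k] (h2 : (2 : k) ≠ 0)
    (m n q : ℕ) (lam : ℕ → ℕ)
    (hlam : ∀ i, lam (i + 1) ≤ lam i) (hsupp : ∀ i, q ≤ i → lam i = 0) :
    chSHat k (lam 0) (conjOf q lam) (fun _ => 0)
        (fun j : Fin (m + n) => if (j : ℕ) < m then (0 : ZMod 2) else 1)
      = hookSchur q m n lam := by
  have ha : Antitone lam := antitone_nat_of_succ_le hlam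
  rw [chSHat_eq h2 conj_antitone, sum_std_eq ha, sum_hstd ha]

end SuperSchur
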